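/- arXiv:1904.11538 — 12 statements merged into one kernel-verified Lean document; each statement's English description precedes it below -/
import Mathlib

section
/- The dynamic programming operator F satisfies ‖F Q − F Q′‖_π ≤ β ‖Q − Q′‖_π for all Q, Q′ ∈ L²(π), i.e., F is a β-contraction on L²(π). -/
open MeasureTheory ProbabilityTheory

theorem aux_sq {X : Type*} [MeasurableSpace X] (μ : Measure X) (f : X → ℝ) :
    eLpNorm f 2 μ ^ 2 = ∫⁻ x, ‖f x‖ₑ ^ 2 ∂μ := by
  have h := eLpNorm_nnreal_pow_eq_lintegral (μ := μ) (f := f) (p := 2) (by norm_num)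
  simpa using h

theorem aux_int {X : Type*} [MeasurableSpace X]
    (P : Kernel X X) (π : Measure X)
    (hinv : π.bind (fun x => P x) = π) (g : X → ℝ) (hg : Measurable g) (hi : Integrable g π) :
    ∀ᵐ x ∂π, Integrable g (P x) := by
  have h1 : ∫⁻ x, ∫⁻ y, ‖g y‖ₑ ∂(P x) ∂π = ∫⁻ y, ‖g y‖ₑ ∂π := by
    conv_rhs => rw [← hinv]
    rw [Measure.lintegral_bind P.measurable.aemeasurable hg.enorm.aemeasurable]
  have h2 : ∫⁻ y, ‖g y‖ₑ ∂π < ⊤ := hi.2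
  have h3 := ae_lt_top (μ := π) (f := fun x => ∫⁻ y, ‖g y‖ₑ ∂(P x))
    (hg.enorm.lintegral_kernel) (by rw [h1]; exact h2.ne)
  filter_upwards [h3] with x hx
  exact ⟨hg.aestronglyMeasurable, hx⟩

/-- The dynamic programming operator
`F Q (x) = c(x) + β ∫ min(c_s(y), Q(y)) P(x,dy)` satisfies
`‖F Q − F Q′‖_π ≤ β ‖Q − Q′‖_π` for all `Q, Q′ ∈ L²(π)`,
i.e., `F` is a `β`-contraction on `L²(π)`. -/
theorem dp_operator_beta_contraction
    {X : Type*} [MeasurableSpace X]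
    (P : Kernel X X) [IsMarkovKernel P]
    (π : Measure X) [IsProbabilityMeasure π]
    (hinv : π.bind (fun x => P x) = π)
    (β : ℝ) (hβ : β ∈ Set.Ioo (0 : ℝ) 1)
    (c cs : X → ℝ) (hcm : Measurable c) (hcsm : Measurable cs)
    (hc2 : MemLp c 2 π) (hcs2 : MemLp cs 2 π)
    (F : (X → ℝ) → (X → ℝ))
    (hF : ∀ Q x, F Q x = c x + β * ∫ y, min (cs y) (Q y) ∂(P x))
    (Q Q' : X → ℝ) (hQm : Measurable Q) (hQ'm : Measurable Q')
    (hQ2 : MemLp Q 2 π) (hQ'2 : MemLp Q' 2 π) :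
    eLpNorm (fun x => F Q x - F Q' x) 2 π ≤
      ENNReal.ofReal β * eLpNorm (fun x => Q x - Q' x) 2 π := by
  have hm : Measurable (fun y => min (cs y) (Q y)) := hcsm.min hQm
  have hm' : Measurable (fun y => min (cs y) (Q' y)) := hcsm.min hQ'm
  have i1 := aux_int P π hinv _ hm
    ((hcs2.integrable one_le_two).inf (hQ2.integrable one_le_two))
  have i2 := aux_int P π hinv _ hm'
    ((hcs2.integrable one_le_two).inf (hQ'2.integrable one_le_two))
  have hd : Measurable (fun y => Q y - Q' y) := hQm.sub hQ'm
  have key : ∀ᵐ x ∂π, ‖F Q x - F Q' x‖ₑ ^ 2 ≤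
      ENNReal.ofReal β ^ 2 * ∫⁻ y, ‖Q y - Q' y‖ₑ ^ 2 ∂(P x) := by
    filter_upwards [i1, i2] with x h1 h2
    have e : F Q x - F Q' x = β * ∫ y, (min (cs y) (Q y) - min (cs y) (Q' y)) ∂(P x) := by
      rw [hF, hF, integral_sub h1 h2]; ring
    rw [e, enorm_mul, Real.enorm_of_nonneg hβ.1.le, mul_pow, ← aux_sq]
    gcongr
    calc _ ≤ ∫⁻ y, ‖min (cs y) (Q y) - min (cs y) (Q' y)‖ₑ ∂(P x) :=
          enorm_integral_le_lintegral_enorm _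
      _ ≤ ∫⁻ y, ‖Q y - Q' y‖ₑ ∂(P x) := by
          refine lintegral_mono fun y => ?_
          rw [enorm_le_iff_norm_le, Real.norm_eq_abs, Real.norm_eq_abs]
          have := abs_min_sub_min_le_max (cs y) (Q y) (cs y) (Q' y)
          simpa using this
      _ = eLpNorm (fun y => Q y - Q' y) 1 (P x) := (eLpNorm_one_eq_lintegral_enorm).symm
      _ ≤ _ := eLpNorm_le_eLpNorm_of_exponent_le one_le_two hd.aestronglyMeasurable
  rw [← ENNReal.pow_le_pow_left_iff (two_ne_zero), mul_pow, aux_sq, aux_sq]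
  refine (lintegral_mono_ae key).trans ?_
  have hd2 : Measurable (fun y => ‖Q y - Q' y‖ₑ ^ 2) := hd.enorm.pow_const 2
  rw [lintegral_const_mul _ hd2.lintegral_kernel]
  conv_rhs => rw [← hinv]
  rw [Measure.lintegral_bind P.measurable.aemeasurable hd2.aemeasurable]
end

section
/- The dynamic programming operator F maps L²(π) to itself and has a unique fixed point Q* ∈ L²(π), i.e., there exists Q* ∈ L²(π) with F Q* = Q* (π-almost everywhere), and any two such fixed points agree π-almost everywhere. -/
open MeasureTheory ProbabilityTheory

lemma dp_aux_bound {X : Type*} [MeasurableSpace X]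
    (P : Kernel X X) [IsMarkovKernel P] (π : Measure X)
    (hinv : π.bind (fun x => P x) = π) (g f : X → ℝ) (hg : Measurable g)
    (hfg : ∀ᵐ x ∂π, ‖f x‖ₑ ≤ ∫⁻ y, ‖g y‖ₑ ∂(P x)) :
    eLpNorm f 2 π ≤ eLpNorm g 2 π := by
  have key : ∫⁻ x, ‖f x‖ₑ ^ (2:ℝ) ∂π ≤ ∫⁻ x, ‖g x‖ₑ ^ (2:ℝ) ∂π := by
    conv_rhs => rw [← hinv]
    rw [Measure.lintegral_bind P.measurable.aemeasurable (by fun_prop)]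
    apply lintegral_mono_ae
    filter_upwards [hfg] with x hx
    have h1 := eLpNorm_le_eLpNorm_of_exponent_le (μ := P x) (f := g) (p := 1) (q := 2)
      (by norm_num) hg.aestronglyMeasurable
    rw [eLpNorm_one_eq_lintegral_enorm] at h1
    have h2 := ENNReal.rpow_le_rpow (hx.trans h1) (by norm_num : (0:ℝ) ≤ 2)
    rw [eLpNorm_eq_lintegral_rpow_enorm_toReal (by norm_num) (by norm_num),
      ← ENNReal.rpow_mul] at h2
    simpa using h2
  rw [eLpNorm_eq_lintegral_rpow_enorm_toReal (by norm_num) (by norm_num),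
    eLpNorm_eq_lintegral_rpow_enorm_toReal (by norm_num) (by norm_num)]
  exact ENNReal.rpow_le_rpow (by simpa using key) (by norm_num)

lemma dp_aux_int {X : Type*} [MeasurableSpace X]
    (P : Kernel X X) [IsMarkovKernel P] (π : Measure X) [IsProbabilityMeasure π]
    (hinv : π.bind (fun x => P x) = π) (g : X → ℝ) (hg : Measurable g)
    (hg2 : MemLp g 2 π) : ∀ᵐ x ∂π, Integrable g (P x) := by
  have h1 : Integrable g π := hg2.integrable (by norm_num)
  have h2 : ∫⁻ x, ‖g x‖ₑ ∂π < ⊤ := h1.2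
  rw [← hinv, Measure.lintegral_bind P.measurable.aemeasurable (by fun_prop)] at h2
  have h3 := ae_lt_top (hg.enorm.lintegral_kernel (κ := P)) h2.ne
  filter_upwards [h3] with x hx
  exact ⟨hg.aestronglyMeasurable, hx⟩

/-- The dynamic programming operator
`F Q (x) = c(x) + β ∫ min(c_s(y), Q(y)) P(x,dy)` maps `L²(π)` to itself and has a
unique fixed point `Q* ∈ L²(π)`: there exists `Q* ∈ L²(π)` with `F Q* = Q*`
(π-almost everywhere), and any two such fixed points agree π-almost everywhere. -/
theorem dp_operator_unique_fixed_point
    {X : Type*} [MeasurableSpace X]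
    (P : Kernel X X) [IsMarkovKernel P]
    (π : Measure X) [IsProbabilityMeasure π]
    (hinv : π.bind (fun x => P x) = π)
    (β : ℝ) (hβ : β ∈ Set.Ioo (0 : ℝ) 1)
    (c cs : X → ℝ) (hcm : Measurable c) (hcsm : Measurable cs)
    (hc2 : MemLp c 2 π) (hcs2 : MemLp cs 2 π)
    (F : (X → ℝ) → (X → ℝ))
    (hF : ∀ Q x, F Q x = c x + β * ∫ y, min (cs y) (Q y) ∂(P x)) :
    -- F maps L²(π) to itself
    (∀ Q : X → ℝ, Measurable Q → MemLp Q 2 π → MemLp (F Q) 2 π) ∧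
    -- existence and uniqueness of the fixed point in L²(π)
    (∃ Qstar : X → ℝ, Measurable Qstar ∧ MemLp Qstar 2 π ∧
      F Qstar =ᵐ[π] Qstar ∧
      ∀ Q : X → ℝ, Measurable Q → MemLp Q 2 π → F Q =ᵐ[π] Q →
        Q =ᵐ[π] Qstar) := by
  have hmin : ∀ Q : X → ℝ, Measurable Q → MemLp Q 2 π →
      MemLp (fun y => min (cs y) (Q y)) 2 π := fun Q _ hQ2 => hcs2.inf hQ2
  have hmap : ∀ Q : X → ℝ, Measurable Q → MemLp Q 2 π → MemLp (F Q) 2 π := by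
    intro Q hQ hQ2
    have hm : Measurable fun y => min (cs y) (Q y) := hcsm.min hQ
    have hK : MemLp (fun x => ∫ y, min (cs y) (Q y) ∂(P x)) 2 π := by
      refine ⟨(hm.stronglyMeasurable.integral_kernel (κ := P)).aestronglyMeasurable, ?_⟩
      refine lt_of_le_of_lt (dp_aux_bound P π hinv _ _ hm ?_) (hmin Q hQ hQ2).2
      exact Filter.Eventually.of_forall fun x => enorm_integral_le_lintegral_enorm _
    have : F Q = fun x => c x + β * ∫ y, min (cs y) (Q y) ∂(P x) := funext (hF Q)
    rw [this]
    exact hc2.add (hK.const_mul β)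
  have hcontr : ∀ Q R : X → ℝ, Measurable Q → MemLp Q 2 π → Measurable R → MemLp R 2 π →
      eLpNorm (F Q - F R) 2 π ≤ ENNReal.ofReal β * eLpNorm (Q - R) 2 π := by
    intro Q R hQ hQ2 hR hR2
    have hmQ : Measurable fun y => min (cs y) (Q y) := hcsm.min hQ
    have hmR : Measurable fun y => min (cs y) (R y) := hcsm.min hR
    have e : F Q - F R = β • fun x =>
        (∫ y, min (cs y) (Q y) ∂(P x)) - ∫ y, min (cs y) (R y) ∂(P x) := by
      funext x
      simp only [Pi.sub_apply, Pi.smul_apply, smul_eq_mul, hF]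
      ring
    rw [e, eLpNorm_const_smul, Real.enorm_eq_ofReal hβ.1.le]
    gcongr
    refine dp_aux_bound P π hinv (Q - R) _ (hQ.sub hR) ?_
    filter_upwards [dp_aux_int P π hinv _ hmQ (hmin Q hQ hQ2),
      dp_aux_int P π hinv _ hmR (hmin R hR hR2)] with x h1 h2
    rw [← integral_sub h1 h2]
    refine (enorm_integral_le_lintegral_enorm _).trans (lintegral_mono fun y => ?_)
    rw [enorm_le_iff_norm_le, Real.norm_eq_abs, Real.norm_eq_abs]
    have := abs_min_sub_min_le_max (cs y) (Q y) (cs y) (R y)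
    simpa using this
  refine ⟨hmap, ?_⟩
  have hLm : ∀ q : Lp ℝ 2 π, Measurable q := fun q => (Lp.stronglyMeasurable q).measurable
  let T : Lp ℝ 2 π → Lp ℝ 2 π := fun q => (hmap q (hLm q) (Lp.memLp q)).toLp
  have hT : ContractingWith (Real.toNNReal β) T := by
    refine ⟨by simpa using hβ.2, fun q r => ?_⟩
    rw [Lp.edist_toLp_toLp, Lp.edist_def]
    exact hcontr q r (hLm q) (Lp.memLp q) (hLm r) (Lp.memLp r)
  let q := ContractingWith.fixedPoint T hT
  have hq : T q = q := hT.fixedPoint_isFixedPt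
  have hfix : F q =ᵐ[π] q := by
    have h := (hmap q (hLm q) (Lp.memLp q)).coeFn_toLp
    change (T q : X → ℝ) =ᵐ[π] F q at h
    rw [hq] at h
    exact h.symm
  refine ⟨q, hLm q, Lp.memLp q, hfix, fun Q hQ hQ2 hQF => ?_⟩
  have h1 := hcontr Q q hQ hQ2 (hLm q) (Lp.memLp q)
  rw [eLpNorm_congr_ae (hQF.sub hfix)] at h1
  have hsub := hQ2.sub (Lp.memLp q)
  have h0 : eLpNorm (Q - (q : X → ℝ)) 2 π = 0 := by
    by_contra hne
    have : ENNReal.ofReal β * eLpNorm (Q - (q : X → ℝ)) 2 π < 1 * eLpNorm (Q - (q : X → ℝ)) 2 π :=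
      ENNReal.mul_lt_mul_left hne hsub.2.ne (by simpa using hβ.2)
    rw [one_mul] at this
    exact absurd h1 (not_le.mpr this)
  rw [eLpNorm_eq_zero_iff hsub.1 (by norm_num)] at h0
  filter_upwards [h0] with x hx
  simpa [sub_eq_zero] using hx
end

section
/- For each θ ∈ ℝ^d, the operator F^θ defined by F^θ Q = c + β P H^θ Q satisfies ‖F^θ Q − F^θ Q′‖_π ≤ β ‖Q − Q′‖_π for all Q, Q′ ∈ L²(π). -/
open MeasureTheory ProbabilityTheory

/-- For each `θ ∈ ℝ^d`, the operator `F^θ Q = c + β P H^θ Q`, where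
`H^θ Q (x) = Q(x)` if `Q^θ(x) < c_s(x)` and `H^θ Q (x) = c_s(x)` otherwise
(with `Q^θ(x) = θᵀ ψ(x)`), satisfies `‖F^θ Q − F^θ Q′‖_π ≤ β ‖Q − Q′‖_π`
for all `Q, Q′ ∈ L²(π)`. -/
theorem Ftheta_beta_contraction
    {X : Type*} [MeasurableSpace X] {d : ℕ}
    (P : Kernel X X) [IsMarkovKernel P]
    (π : Measure X) [IsProbabilityMeasure π]
    (hinv : π.bind (fun x => P x) = π)
    (β : ℝ) (hβ : β ∈ Set.Ioo (0 : ℝ) 1)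
    (c cs : X → ℝ) (hcm : Measurable c) (hcsm : Measurable cs)
    (hc2 : MemLp c 2 π) (hcs2 : MemLp cs 2 π)
    (ψ : X → Fin d → ℝ) (hψm : Measurable ψ)
    (hψ2 : ∀ i, MemLp (fun x => ψ x i) 2 π)
    (H : (Fin d → ℝ) → (X → ℝ) → (X → ℝ))
    (hH : ∀ θ Q x, H θ Q x = if (∑ i, θ i * ψ x i) < cs x then Q x else cs x)
    (Fθ : (Fin d → ℝ) → (X → ℝ) → (X → ℝ))
    (hFθ : ∀ θ Q x, Fθ θ Q x = c x + β * ∫ y, H θ Q y ∂(P x))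
    (θ : Fin d → ℝ)
    (Q Q' : X → ℝ) (hQm : Measurable Q) (hQ'm : Measurable Q')
    (hQ2 : MemLp Q 2 π) (hQ'2 : MemLp Q' 2 π) :
    eLpNorm (fun x => Fθ θ Q x - Fθ θ Q' x) 2 π ≤
      ENNReal.ofReal β * eLpNorm (fun x => Q x - Q' x) 2 π := by
  have hset : MeasurableSet {x | (∑ i, θ i * ψ x i) < cs x} := by
    apply measurableSet_lt _ hcsm
    fun_prop
  have hHm : ∀ R : X → ℝ, Measurable R → Measurable (H θ R) := by
    intro R hR
    have : H θ R = fun x => if (∑ i, θ i * ψ x i) < cs x then R x else cs x :=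
      funext (hH θ R)
    rw [this]
    exact Measurable.ite hset hR hcsm
  have hbind : ∀ f : X → ENNReal, Measurable f → ∫⁻ x, ∫⁻ y, f y ∂(P x) ∂π = ∫⁻ x, f x ∂π := by
    intro f hf
    have h := Measure.lintegral_bind (m := π) (μ := fun x => P x) (f := f)
      P.measurable.aemeasurable hf.aemeasurable
    rw [hinv] at h
    exact h.symm
  have hint : ∀ R : X → ℝ, Measurable R → MemLp R 2 π →
      ∀ᵐ x ∂π, Integrable (H θ R) (P x) := by
    intro R hR hR2
    have hi : Integrable (fun x => |R x| + |cs x|) π :=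
      ((hR2.integrable (by norm_num)).abs).add ((hcs2.integrable (by norm_num)).abs)
    have hi2 : Integrable (H θ R) π := by
      refine hi.mono (hHm R hR).aestronglyMeasurable (Filter.Eventually.of_forall fun x => ?_)
      rw [hH, Real.norm_eq_abs, Real.norm_eq_abs, abs_of_nonneg (add_nonneg (abs_nonneg (R x)) (abs_nonneg (cs x)))]
      split_ifs
      · linarith [abs_nonneg (cs x)]
      · linarith [abs_nonneg (R x)]
    have hm : Measurable (fun y => ‖H θ R y‖ₑ) := (hHm R hR).enorm
    have hfin : ∫⁻ x, ∫⁻ y, ‖H θ R y‖ₑ ∂(P x) ∂π ≠ ⊤ := by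
      rw [hbind _ hm]
      exact hi2.2.ne
    filter_upwards [ae_lt_top hm.lintegral_kernel hfin] with x hx
    exact ⟨(hHm R hR).aestronglyMeasurable, hx⟩
  have hDm : Measurable (fun x => Q x - Q' x) := hQm.sub hQ'm
  have hsq : ∀ (f : X → ℝ) (μ : Measure X), eLpNorm f 2 μ ^ (2:ℝ) = ∫⁻ x, ‖f x‖ₑ ^ (2:ℝ) ∂μ := by
    intro f μ
    have := eLpNorm_nnreal_pow_eq_lintegral (f := f) (μ := μ) (p := 2) (by norm_num)
    simpa using this
  have key : ∀ᵐ x ∂π, ‖Fθ θ Q x - Fθ θ Q' x‖ₑ ≤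
      ENNReal.ofReal β * eLpNorm (fun y => Q y - Q' y) 2 (P x) := by
    filter_upwards [hint Q hQm hQ2, hint Q' hQ'm hQ'2] with x h1 h2
    have e : Fθ θ Q x - Fθ θ Q' x = β * ∫ y, (H θ Q y - H θ Q' y) ∂(P x) := by
      rw [integral_sub h1 h2, hFθ, hFθ]; ring
    rw [e, enorm_mul, Real.enorm_of_nonneg hβ.1.le]
    gcongr
    calc ‖∫ y, (H θ Q y - H θ Q' y) ∂(P x)‖ₑ ≤ ∫⁻ y, ‖H θ Q y - H θ Q' y‖ₑ ∂(P x) :=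
          enorm_integral_le_lintegral_enorm _
      _ ≤ ∫⁻ y, ‖Q y - Q' y‖ₑ ∂(P x) := by
          apply lintegral_mono
          intro y
          simp only [hH]
          split_ifs <;> simp
      _ = eLpNorm (fun y => Q y - Q' y) 1 (P x) := eLpNorm_one_eq_lintegral_enorm.symm
      _ ≤ _ := eLpNorm_le_eLpNorm_of_exponent_le (by norm_num) hDm.aestronglyMeasurable
  rw [← ENNReal.rpow_le_rpow_iff (z := 2) (by norm_num),
    ENNReal.mul_rpow_of_nonneg _ _ (by norm_num), hsq, hsq]
  have hDe : Measurable (fun y => ‖Q y - Q' y‖ₑ ^ (2:ℝ)) := hDm.enorm.pow_const _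
  calc ∫⁻ x, ‖Fθ θ Q x - Fθ θ Q' x‖ₑ ^ (2:ℝ) ∂π
      ≤ ∫⁻ x, ENNReal.ofReal β ^ (2:ℝ) * ∫⁻ y, ‖Q y - Q' y‖ₑ ^ (2:ℝ) ∂(P x) ∂π := by
        apply lintegral_mono_ae
        filter_upwards [key] with x hx
        rw [← hsq, ← ENNReal.mul_rpow_of_nonneg _ _ (by norm_num)]
        exact ENNReal.rpow_le_rpow hx (by norm_num)
    _ = _ := by
        rw [lintegral_const_mul _ hDe.lintegral_kernel, hbind _ hDe]
end

section
/- For each θ ∈ ℝ^d and every vector v ∈ ℝ^d, the matrix A(θ) satisfies −vᵀ A(θ) v ≥ (1 − β) vᵀ Σ_ψ v, where Σ_ψ = ∫ ψ(x) ψ(x)ᵀ π(dx). -/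
open MeasureTheory ProbabilityTheory Matrix

/-- For each `θ ∈ ℝ^d` and each `v ∈ ℝ^d`, the matrix
`A(θ) = ∫∫ ψ(x)(β 𝟙{θᵀψ(y) < c_s(y)} ψ(y) − ψ(x))ᵀ P(x,dy) π(dx)` satisfies
`−vᵀ A(θ) v ≥ (1 − β) vᵀ Σ_ψ v`, where `Σ_ψ = ∫ ψ(x) ψ(x)ᵀ π(dx)`. -/
theorem Atheta_negative_definite_bound
    {X : Type*} [MeasurableSpace X] {d : ℕ}
    (P : Kernel X X) [IsMarkovKernel P]
    (π : Measure X) [IsProbabilityMeasure π]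
    (hinv : π.bind (fun x => P x) = π)
    (β : ℝ) (hβ : β ∈ Set.Ioo (0 : ℝ) 1)
    (cs : X → ℝ) (hcsm : Measurable cs)
    (ψ : X → Fin d → ℝ) (hψm : Measurable ψ)
    (hψ2 : ∀ i, MemLp (fun x => ψ x i) 2 π)
    (A : (Fin d → ℝ) → Matrix (Fin d) (Fin d) ℝ)
    (hA : ∀ θ i j, A θ i j =
      ∫ x, ∫ y, ψ x i * (β * (if θ ⬝ᵥ ψ y < cs y then ψ y j else 0) - ψ x j)
        ∂(P x) ∂π)
    (Sψ : Matrix (Fin d) (Fin d) ℝ)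
    (hSψ : ∀ i j, Sψ i j = ∫ x, ψ x i * ψ x j ∂π)
    (θ v : Fin d → ℝ) :
    (1 - β) * (v ⬝ᵥ (Sψ *ᵥ v)) ≤ -(v ⬝ᵥ (A θ *ᵥ v)) := by
  classical
  set μ := π ⊗ₘ P with hμ
  have h1 : MeasurePreserving (Prod.fst : X × X → X) μ π :=
    ⟨measurable_fst, Measure.fst_compProd π P⟩
  have h2 : MeasurePreserving (Prod.snd : X × X → X) μ π :=
    ⟨measurable_snd, (Measure.snd_compProd π P).trans hinv⟩
  have hset : MeasurableSet {y | θ ⬝ᵥ ψ y < cs y} := by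
    apply measurableSet_lt _ hcsm
    unfold dotProduct
    fun_prop
  set g : Fin d → X → ℝ := fun j y => if θ ⬝ᵥ ψ y < cs y then ψ y j else 0 with hg
  have hg2 : ∀ j, MemLp (g j) 2 π := fun j => by
    have := (hψ2 j).indicator hset
    exact this
  have hψ1 : ∀ i, MemLp (fun z : X × X => ψ z.1 i) 2 μ := fun i =>
    (hψ2 i).comp_measurePreserving h1
  have hgs : ∀ i, MemLp (fun z : X × X => g i z.2) 2 μ := fun i =>
    (hg2 i).comp_measurePreserving h2
  have hint : ∀ i j, Integrable (fun z : X × X => ψ z.1 i * (β * g j z.2 - ψ z.1 j)) μ :=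
    fun i j => (hψ1 i).integrable_mul (((hgs j).const_mul β).sub (hψ1 j))
  have hA' : ∀ i j, A θ i j = ∫ z, ψ z.1 i * (β * g j z.2 - ψ z.1 j) ∂μ := fun i j => by
    rw [hA, hμ, Measure.integral_compProd (hint i j)]
  set u : X → ℝ := fun x => ∑ i, v i * ψ x i with hu
  set w : X → ℝ := fun x => ∑ i, v i * g i x with hw
  have hu2 : MemLp u 2 π := memLp_finsetSum _ fun i _ => (hψ2 i).const_mul (v i)
  have hw2 : MemLp w 2 π := memLp_finsetSum _ fun i _ => (hg2 i).const_mul (v i)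
  have hu1 : MemLp (fun z : X × X => u z.1) 2 μ := hu2.comp_measurePreserving h1
  have hus : MemLp (fun z : X × X => u z.2) 2 μ := hu2.comp_measurePreserving h2
  have hws : MemLp (fun z : X × X => w z.2) 2 μ := hw2.comp_measurePreserving h2
  have hS : v ⬝ᵥ (Sψ *ᵥ v) = ∫ x, u x * u x ∂π := by
    have : ∀ x, u x * u x = ∑ i, ∑ j, v i * v j * (ψ x i * ψ x j) := fun x => by
      simp only [hu, Finset.sum_mul_sum]
      exact Finset.sum_congr rfl fun i _ => Finset.sum_congr rfl fun j _ => by ring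
    have hi : ∀ i j, Integrable (fun x => v i * v j * (ψ x i * ψ x j)) π := fun i j =>
      ((hψ2 i).integrable_mul (hψ2 j)).const_mul _
    simp only [this]
    rw [integral_finsetSum _ fun i _ => integrable_finsetSum _ fun j _ => hi i j]
    simp only [dotProduct, mulVec, Finset.mul_sum]
    refine Finset.sum_congr rfl fun i _ => ?_
    rw [integral_finsetSum _ fun j _ => hi i j]
    refine Finset.sum_congr rfl fun j _ => ?_
    rw [integral_const_mul, hSψ]
    ring
  have hAv : v ⬝ᵥ (A θ *ᵥ v) = ∫ z, u z.1 * (β * w z.2 - u z.1) ∂μ := by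
    have : ∀ z : X × X, u z.1 * (β * w z.2 - u z.1)
        = ∑ i, ∑ j, v i * v j * (ψ z.1 i * (β * g j z.2 - ψ z.1 j)) := fun z => by
      simp only [hu, hw, Finset.mul_sum, ← Finset.sum_sub_distrib]
      rw [← Finset.mul_sum, Finset.sum_mul_sum]
      exact Finset.sum_congr rfl fun i _ => Finset.sum_congr rfl fun j _ => by ring
    have hi : ∀ i j, Integrable
        (fun z : X × X => v i * v j * (ψ z.1 i * (β * g j z.2 - ψ z.1 j))) μ := fun i j =>
      (hint i j).const_mul _
    simp only [this]
    rw [integral_finsetSum _ fun i _ => integrable_finsetSum _ fun j _ => hi i j]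
    simp only [dotProduct, mulVec, Finset.mul_sum]
    refine Finset.sum_congr rfl fun i _ => ?_
    rw [integral_finsetSum _ fun j _ => hi i j]
    refine Finset.sum_congr rfl fun j _ => ?_
    rw [integral_const_mul, hA']
    ring
  have huu : Integrable (fun x => u x * u x) π := hu2.integrable_mul hu2
  have hI1 : Integrable (fun z : X × X => u z.1 * u z.1) μ := hu1.integrable_mul hu1
  have hI2 : Integrable (fun z : X × X => u z.2 * u z.2) μ := hus.integrable_mul hus
  have e1 : ∫ z, u z.1 * u z.1 ∂μ = ∫ x, u x * u x ∂π := by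
    rw [← h1.map_eq] at huu ⊢
    exact (integral_map h1.measurable.aemeasurable huu.aestronglyMeasurable).symm
  have e2 : ∫ z, u z.2 * u z.2 ∂μ = ∫ x, u x * u x ∂π := by
    rw [← h2.map_eq] at huu ⊢
    exact (integral_map h2.measurable.aemeasurable huu.aestronglyMeasurable).symm
  have hIA : Integrable (fun z : X × X => u z.1 * (β * w z.2 - u z.1)) μ :=
    hu1.integrable_mul ((hws.const_mul β).sub hu1)
  have hwu : ∀ y, w y = u y ∨ w y = 0 := fun y => by
    by_cases h : θ ⬝ᵥ ψ y < cs y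
    · left; simp [hw, hu, hg, h]
    · right; simp [hw, hg, h]
  have key : ∫ z, u z.1 * (β * w z.2 - u z.1) ∂μ
      ≤ ∫ z, ((β / 2 - 1) * (u z.1 * u z.1) + β / 2 * (u z.2 * u z.2)) ∂μ := by
    refine integral_mono hIA ((hI1.const_mul _).add (hI2.const_mul _)) fun z => ?_
    have hb := hβ.1
    have : u z.1 * w z.2 ≤ (u z.1 * u z.1 + u z.2 * u z.2) / 2 := by
      rcases hwu z.2 with h | h <;> rw [h]
      · nlinarith [sq_nonneg (u z.1 - u z.2)]
      · nlinarith [mul_self_nonneg (u z.1), mul_self_nonneg (u z.2)]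
    have := mul_le_mul_of_nonneg_left this hb.le
    change u z.1 * (β * w z.2 - u z.1) ≤ (β / 2 - 1) * (u z.1 * u z.1) + β / 2 * (u z.2 * u z.2)
    linarith
  rw [integral_add (hI1.const_mul _) (hI2.const_mul _), integral_const_mul, integral_const_mul,
    e1, e2] at key
  rw [hS, hAv]
  linarith
end

section
/- Suppose the covariance matrix Σ_ψ is positive definite and let λ_min > 0 denote its smallest eigenvalue. Then for every θ ∈ ℝ^d, every (complex) eigenvalue λ of the real matrix A(θ) satisfies Re(λ) ≤ −(1 − β) λ_min; in particular all eigenvalues of A(θ) are strictly bounded away from 0, uniformly in θ. -/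
open MeasureTheory ProbabilityTheory Matrix

lemma rayleigh_aux {d : ℕ} (S : Matrix (Fin d) (Fin d) ℝ) (hS : S.IsHermitian) (l : ℝ)
    (hl : ∀ m ∈ spectrum ℝ S, l ≤ m) (v : Fin d → ℝ) : l * (v ⬝ᵥ v) ≤ v ⬝ᵥ (S *ᵥ v) := by
  have h : (S - algebraMap ℝ _ l).PosSemidef := by
    rw [Matrix.posSemidef_iff_isHermitian_and_spectrum_nonneg]
    refine ⟨?_, ?_⟩
    · refine hS.sub ?_
      simp [Matrix.IsHermitian, Matrix.algebraMap_eq_diagonal]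
    · intro m hm
      rw [← spectrum.sub_singleton_eq] at hm
      obtain ⟨a, ha, b, hb, rfl⟩ := hm
      simp only [Set.mem_singleton_iff] at hb
      subst hb
      simpa using hl a ha
  have := h.dotProduct_mulVec_nonneg v
  simp only [star_trivial, Matrix.sub_mulVec, dotProduct_sub, Algebra.algebraMap_eq_smul_one,
    Matrix.smul_mulVec, Matrix.one_mulVec, dotProduct_smul, smul_eq_mul] at this
  linarith

lemma eig_aux {d : ℕ} (A : Matrix (Fin d) (Fin d) ℝ) (c : ℝ)
    (h : ∀ v : Fin d → ℝ, v ⬝ᵥ (A *ᵥ v) ≤ c * (v ⬝ᵥ v)) (lam : ℂ)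
    (hl : lam ∈ spectrum ℂ (A.map (Complex.ofReal : ℝ → ℂ))) : lam.re ≤ c := by
  rw [← Matrix.spectrum_toLin', ← Module.End.hasEigenvalue_iff_mem_spectrum] at hl
  obtain ⟨z, hz⟩ := hl.exists_hasEigenvector
  have hz1 := hz.apply_eq_smul
  have hz0 := hz.2
  rw [Matrix.toLin'_apply] at hz1
  set u : Fin d → ℝ := fun i => (z i).re with hu
  set w : Fin d → ℝ := fun i => (z i).im with hw
  have hre : A *ᵥ u = lam.re • u - lam.im • w := by
    ext i
    have := congrArg Complex.re (congrFun hz1 i)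
    simpa [Matrix.mulVec, dotProduct, Complex.re_sum] using this
  have him : A *ᵥ w = lam.re • w + lam.im • u := by
    ext i
    have := congrArg Complex.im (congrFun hz1 i)
    simpa [Matrix.mulVec, dotProduct, Complex.im_sum] using this
  have h1 := h u
  have h2 := h w
  rw [hre] at h1
  rw [him] at h2
  simp only [dotProduct_sub, dotProduct_add, dotProduct_smul, smul_eq_mul] at h1 h2
  rw [dotProduct_comm w u] at h2
  have nn : ∀ v : Fin d → ℝ, 0 ≤ v ⬝ᵥ v := fun v =>
    Finset.sum_nonneg fun i _ => mul_self_nonneg _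
  have hpos : 0 < u ⬝ᵥ u + w ⬝ᵥ w := by
    rcases (add_nonneg (nn u) (nn w)).lt_or_eq with h | h
    · exact h
    · exfalso
      apply hz0
      have hu0 : u ⬝ᵥ u = 0 := by linarith [nn u, nn w]
      have hw0 : w ⬝ᵥ w = 0 := by linarith [nn u, nn w]
      rw [dotProduct_self_eq_zero] at hu0 hw0
      ext i
      exact Complex.ext (congrFun hu0 i) (congrFun hw0 i)
  by_contra hc
  push Not at hc
  nlinarith

lemma quad_aux {X : Type*} [MeasurableSpace X] {d : ℕ}
    (P : Kernel X X) [IsMarkovKernel P]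
    (π : Measure X) [IsProbabilityMeasure π]
    (hinv : π.bind (fun x => P x) = π)
    (β : ℝ) (hβ : β ∈ Set.Ioo (0 : ℝ) 1)
    (ψ : X → Fin d → ℝ) 
    (hψ2 : ∀ i, MemLp (fun x => ψ x i) 2 π)
    (s : Set X) [DecidablePred (· ∈ s)] (hs : MeasurableSet s)
    (A S : Matrix (Fin d) (Fin d) ℝ)
    (hA : ∀ i j, A i j =
      ∫ x, ∫ y, ψ x i * (β * (if y ∈ s then ψ y j else 0) - ψ x j) ∂(P x) ∂π)
    (hS : ∀ i j, S i j = ∫ x, ψ x i * ψ x j ∂π) (v : Fin d → ℝ) :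
    v ⬝ᵥ (A *ᵥ v) ≤ -(1 - β) * (v ⬝ᵥ (S *ᵥ v)) := by
  have m1 : MeasurePreserving Prod.fst (π ⊗ₘ P) π := ⟨measurable_fst, Measure.fst_compProd π P⟩
  have m2 : MeasurePreserving Prod.snd (π ⊗ₘ P) π :=
    ⟨measurable_snd, (Measure.snd_compProd π P).trans hinv⟩
  have l1 : ∀ i, MemLp (fun p : X × X => ψ p.1 i) 2 (π ⊗ₘ P) := fun i =>
    (hψ2 i).comp_measurePreserving m1
  have l2 : ∀ i, MemLp (fun p : X × X => if p.2 ∈ s then ψ p.2 i else 0) 2 (π ⊗ₘ P) := fun i => by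
    have : MemLp (s.indicator fun x => ψ x i) 2 π := (hψ2 i).indicator hs
    have := this.comp_measurePreserving m2
    convert this using 2 with p
    simp [Set.indicator]
  have l3 : ∀ i j, Integrable (fun p : X × X =>
      ψ p.1 i * (β * (if p.2 ∈ s then ψ p.2 j else 0) - ψ p.1 j)) (π ⊗ₘ P) := fun i j =>
    (l1 i).integrable_mul (((l2 j).const_mul β).sub (l1 j))
  set f : X → ℝ := fun x => ∑ i, v i * ψ x i with hf
  have lf : MemLp f 2 π := memLp_finset_sum _ fun i _ => (hψ2 i).const_mul _
  have hSv : v ⬝ᵥ (S *ᵥ v) = ∫ x, f x ^ 2 ∂π := by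
    have : ∀ x, f x ^ 2 = ∑ i, ∑ j, v i * v j * (ψ x i * ψ x j) := fun x => by
      rw [sq, hf, Finset.sum_mul_sum]
      exact Finset.sum_congr rfl fun i _ => Finset.sum_congr rfl fun j _ => by ring
    have I : ∀ i j, Integrable (fun x => v i * v j * (ψ x i * ψ x j)) π := fun i j =>
      ((hψ2 i).integrable_mul (hψ2 j)).const_mul _
    simp_rw [this]
    rw [integral_finset_sum _ fun i _ => integrable_finset_sum _ fun j _ => I i j]
    simp only [dotProduct, mulVec, Finset.mul_sum]
    refine Finset.sum_congr rfl fun i _ => ?_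
    rw [integral_finset_sum _ fun j _ => I i j]
    refine Finset.sum_congr rfl fun j _ => ?_
    rw [integral_const_mul, hS]; ring
  have hAf : ∀ p : X × X, ∑ i, ∑ j, v i * v j *
      (ψ p.1 i * (β * (if p.2 ∈ s then ψ p.2 j else 0) - ψ p.1 j)) =
      f p.1 * (β * (if p.2 ∈ s then f p.2 else 0) - f p.1) := fun p => by
    have : β * (if p.2 ∈ s then f p.2 else 0) - f p.1 =
        ∑ j, v j * (β * (if p.2 ∈ s then ψ p.2 j else 0) - ψ p.1 j) := by
      simp only [hf, mul_sub, Finset.sum_sub_distrib]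
      congr 1
      split_ifs
      · rw [Finset.mul_sum]
        exact Finset.sum_congr rfl fun j _ => by ring
      · simp
    rw [this, hf, Finset.sum_mul_sum]
    exact Finset.sum_congr rfl fun i _ => Finset.sum_congr rfl fun j _ => by ring
  have I : ∀ i j, Integrable (fun p : X × X => v i * v j *
      (ψ p.1 i * (β * (if p.2 ∈ s then ψ p.2 j else 0) - ψ p.1 j))) (π ⊗ₘ P) := fun i j =>
      (l3 i j).const_mul _
  have hAv : v ⬝ᵥ (A *ᵥ v) =
      ∫ p, f p.1 * (β * (if p.2 ∈ s then f p.2 else 0) - f p.1) ∂(π ⊗ₘ P) := by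
    simp_rw [← hAf]
    rw [integral_finset_sum _ fun i _ => integrable_finset_sum _ fun j _ => I i j]
    simp only [dotProduct, mulVec, Finset.mul_sum]
    refine Finset.sum_congr rfl fun i _ => ?_
    rw [integral_finset_sum _ fun j _ => I i j]
    refine Finset.sum_congr rfl fun j _ => ?_
    rw [integral_const_mul, hA, Measure.integral_compProd (l3 i j)]; ring
  have Iq : Integrable (fun p : X × X =>
      f p.1 * (β * (if p.2 ∈ s then f p.2 else 0) - f p.1)) (π ⊗ₘ P) := by
    simp_rw [← hAf]
    exact integrable_finset_sum _ fun i _ => integrable_finset_sum _ fun j _ => I i j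
  have J1 : Integrable (fun p : X × X => f p.1 ^ 2) (π ⊗ₘ P) :=
    (lf.comp_measurePreserving m1).integrable_sq
  have J2 : Integrable (fun p : X × X => f p.2 ^ 2) (π ⊗ₘ P) :=
    (lf.comp_measurePreserving m2).integrable_sq
  have lsq : AEStronglyMeasurable (fun x => f x ^ 2) π := lf.integrable_sq.1
  have E1 : ∫ p, f p.1 ^ 2 ∂(π ⊗ₘ P) = ∫ x, f x ^ 2 ∂π := by
    conv_rhs => rw [← m1.map_eq]
    rw [integral_map measurable_fst.aemeasurable (by rw [m1.map_eq]; exact lsq)]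
  have E2 : ∫ p, f p.2 ^ 2 ∂(π ⊗ₘ P) = ∫ x, f x ^ 2 ∂π := by
    conv_rhs => rw [← m2.map_eq]
    rw [integral_map measurable_snd.aemeasurable (by rw [m2.map_eq]; exact lsq)]
  have hle : ∫ p, f p.1 * (β * (if p.2 ∈ s then f p.2 else 0) - f p.1) ∂(π ⊗ₘ P) ≤
      ∫ p, ((β / 2 - 1) * f p.1 ^ 2 + β / 2 * f p.2 ^ 2) ∂(π ⊗ₘ P) := by
    refine integral_mono Iq ((J1.const_mul _).add (J2.const_mul _)) fun p => ?_
    have h0 := hβ.1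
    dsimp only
    split_ifs
    · nlinarith [mul_nonneg h0.le (sq_nonneg (f p.1 - f p.2))]
    · nlinarith [mul_nonneg h0.le (sq_nonneg (f p.1)), mul_nonneg h0.le (sq_nonneg (f p.2))]
  rw [integral_add (J1.const_mul _) (J2.const_mul _), integral_const_mul, integral_const_mul,
    E1, E2] at hle
  rw [hAv, hSv]
  linarith



/-- Suppose `Σ_ψ = ∫ ψ ψᵀ dπ` is positive definite with smallest
eigenvalue `λ_min > 0`.  Then for every `θ ∈ ℝ^d`, every (complex) eigenvalue `λ`
of the real matrix `A(θ)` satisfies `Re(λ) ≤ −(1 − β) λ_min`; in particular all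
eigenvalues of `A(θ)` are strictly bounded away from `0`, uniformly in `θ`. -/
theorem Atheta_eigenvalues_bounded_away
    {X : Type*} [MeasurableSpace X] {d : ℕ}
    (P : Kernel X X) [IsMarkovKernel P]
    (π : Measure X) [IsProbabilityMeasure π]
    (hinv : π.bind (fun x => P x) = π)
    (β : ℝ) (hβ : β ∈ Set.Ioo (0 : ℝ) 1)
    (cs : X → ℝ) (hcsm : Measurable cs)
    (ψ : X → Fin d → ℝ) (hψm : Measurable ψ)
    (hψ2 : ∀ i, MemLp (fun x => ψ x i) 2 π)
    (A : (Fin d → ℝ) → Matrix (Fin d) (Fin d) ℝ)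
    (hA : ∀ θ i j, A θ i j =
      ∫ x, ∫ y, ψ x i * (β * (if θ ⬝ᵥ ψ y < cs y then ψ y j else 0) - ψ x j)
        ∂(P x) ∂π)
    (Sψ : Matrix (Fin d) (Fin d) ℝ)
    (hSψ : ∀ i j, Sψ i j = ∫ x, ψ x i * ψ x j ∂π)
    (hpd : Sψ.PosDef)
    (lammin : ℝ) (hlammin : IsLeast (spectrum ℝ Sψ) lammin)
    (hlampos : 0 < lammin) :
    ∀ (θ : Fin d → ℝ) (lam : ℂ),
      lam ∈ spectrum ℂ ((A θ).map (Complex.ofReal : ℝ → ℂ)) →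
        lam.re ≤ -((1 - β) * lammin) := by
  intro θ lam hlam
  refine eig_aux (A θ) _ (fun v => ?_) lam hlam
  have hdot : Measurable fun y => θ ⬝ᵥ ψ y := by
    simp only [dotProduct]
    exact Finset.measurable_sum _ fun i _ => ((measurable_pi_apply i).comp hψm).const_mul _
  have h1 := quad_aux P π hinv β hβ ψ hψ2 {y | θ ⬝ᵥ ψ y < cs y} (measurableSet_lt hdot hcsm)
    (A θ) Sψ (fun i j => hA θ i j) hSψ v
  have h2 := rayleigh_aux Sψ hpd.1 lammin (fun m hm => hlammin.2 hm) v
  nlinarith [mul_le_mul_of_nonneg_left h2 (sub_nonneg.2 hβ.2.le)]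
end

section
/- Suppose the covariance matrix Σ_ψ is positive definite with smallest eigenvalue λ_min > 0. Then for every θ ∈ ℝ^d the matrix A(θ) is invertible, ‖A(θ) v‖ ≥ (1 − β) λ_min ‖v‖ for all v ∈ ℝ^d, and consequently the family of inverses is uniformly bounded: ‖A(θ)⁻¹‖_op ≤ ((1 − β) λ_min)⁻¹ for all θ ∈ ℝ^d. -/
open MeasureTheory ProbabilityTheory Matrix

/-- The Euclidean norm on `ℝ^d` (vectors as functions `Fin d → ℝ`). -/
noncomputable def euclNorm {d : ℕ} (v : Fin d → ℝ) : ℝ :=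
  Real.sqrt (∑ i, v i ^ 2)


lemma quad_eq_integral {Z : Type*} [MeasurableSpace Z] {d : ℕ} (μ : Measure Z)
    (F G : Fin d → Z → ℝ) (M : Matrix (Fin d) (Fin d) ℝ)
    (hF : ∀ i, MemLp (F i) 2 μ) (hG : ∀ i, MemLp (G i) 2 μ)
    (hM : ∀ i j, M i j = ∫ z, F i z * G j z ∂μ) (v : Fin d → ℝ) :
    v ⬝ᵥ (M *ᵥ v) = ∫ z, (∑ i, v i * F i z) * (∑ j, v j * G j z) ∂μ := by
  have hint : ∀ i j, Integrable (fun z => F i z * G j z) μ := fun i j =>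
    MemLp.integrable_mul (p := 2) (q := 2) (hF i) (hG j)
  have h1 : ∀ z, (∑ i, v i * F i z) * (∑ j, v j * G j z)
      = ∑ i, ∑ j, (v i * v j) * (F i z * G j z) := by
    intro z
    rw [Finset.sum_mul_sum]
    refine Finset.sum_congr rfl fun i _ => Finset.sum_congr rfl fun j _ => by ring
  simp_rw [h1]
  rw [integral_finsetSum _ fun i _ => integrable_finsetSum _ fun j _ => (hint i j).const_mul _]
  simp only [dotProduct, mulVec]
  refine Finset.sum_congr rfl fun i _ => ?_
  rw [integral_finsetSum _ fun j _ => (hint i j).const_mul _, Finset.mul_sum]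
  refine Finset.sum_congr rfl fun j _ => ?_
  rw [integral_const_mul, hM]; ring

lemma lammin_quad {d : ℕ} (S : Matrix (Fin d) (Fin d) ℝ) (hpd : S.PosDef)
    (l : ℝ) (hl : IsLeast (spectrum ℝ S) l) (v : Fin d → ℝ) :
    l * ∑ i, v i ^ 2 ≤ v ⬝ᵥ (S *ᵥ v) := by
  have h : (S - algebraMap ℝ (Matrix (Fin d) (Fin d) ℝ) l).PosSemidef := by
    rw [Matrix.posSemidef_iff_isHermitian_and_spectrum_nonneg]
    refine ⟨hpd.isHermitian.sub ?_, ?_⟩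
    · rw [Matrix.algebraMap_eq_diagonal]
      exact Matrix.isHermitian_diagonal _
    · rw [← spectrum.sub_singleton_eq]
      rintro x ⟨a, ha, b, hb, rfl⟩
      have := hl.2 ha
      simp only [Set.mem_singleton_iff] at hb
      subst hb
      simpa using this
  have h2 := h.dotProduct_mulVec_nonneg v
  have h3 : algebraMap ℝ (Matrix (Fin d) (Fin d) ℝ) l *ᵥ v = l • v := by
    rw [Algebra.algebraMap_eq_smul_one, Matrix.smul_mulVec, Matrix.one_mulVec]
  rw [Matrix.sub_mulVec, h3, dotProduct_sub, dotProduct_smul] at h2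
  simp only [star_trivial, smul_eq_mul] at h2
  have h4 : v ⬝ᵥ v = ∑ i, v i ^ 2 := by simp [dotProduct, sq]
  rw [h4] at h2
  linarith

lemma euclNorm_eq {d : ℕ} (v : Fin d → ℝ) : euclNorm v = ‖WithLp.toLp 2 v‖ := by
  simp [euclNorm, EuclideanSpace.norm_eq]

lemma mat_conclusion {d : ℕ} (M : Matrix (Fin d) (Fin d) ℝ) (c : ℝ) (hc : 0 < c)
    (h : ∀ v : Fin d → ℝ, c * ∑ i, v i ^ 2 ≤ - (v ⬝ᵥ (M *ᵥ v))) :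
    IsUnit M ∧ (∀ v : Fin d → ℝ, c * euclNorm v ≤ euclNorm (M *ᵥ v)) ∧
      ‖(Matrix.toEuclideanCLM (𝕜 := ℝ) (n := Fin d)) M⁻¹‖ ≤ c⁻¹ := by
  have hb : ∀ v : Fin d → ℝ, c * euclNorm v ≤ euclNorm (M *ᵥ v) := by
    intro v
    have h1 := h v
    have h2 := Real.sum_mul_le_sqrt_mul_sqrt Finset.univ v (fun i => - (M *ᵥ v) i)
    have h3 : - (v ⬝ᵥ (M *ᵥ v)) = ∑ i, v i * (- (M *ᵥ v) i) := by
      simp [dotProduct]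
    have h4 : ∑ i, v i ^ 2 = euclNorm v ^ 2 :=
      (Real.sq_sqrt (Finset.sum_nonneg fun i _ => sq_nonneg _)).symm
    simp only [neg_sq] at h2
    change _ ≤ euclNorm v * euclNorm (M *ᵥ v) at h2
    rw [h3, h4] at h1
    have h5 : 0 ≤ euclNorm v := Real.sqrt_nonneg _
    rcases h5.eq_or_lt with h0 | h0
    · rw [← h0, mul_zero]; exact Real.sqrt_nonneg _
    · refine le_of_mul_le_mul_left ?_ h0
      calc _ = c * euclNorm v ^ 2 := by ring
        _ ≤ _ := h1.trans h2
  have hu : IsUnit M := by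
    rw [← Matrix.mulVec_injective_iff_isUnit]
    intro x y hxy
    have h1 := hb (x - y)
    have h2 : M *ᵥ (x - y) = 0 := by
      rw [Matrix.mulVec_sub]; exact sub_eq_zero.2 hxy
    rw [h2, euclNorm_eq, euclNorm_eq, WithLp.toLp_zero, norm_zero] at h1
    have h3 : ‖WithLp.toLp 2 (x - y)‖ ≤ 0 := by
      by_contra hn
      push Not at hn
      have := mul_pos hc hn
      linarith
    have h4 := norm_le_zero_iff.1 h3
    exact sub_eq_zero.1 (congrArg WithLp.ofLp h4)
  refine ⟨hu, hb, ?_⟩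
  refine ContinuousLinearMap.opNorm_le_bound _ (inv_nonneg.2 hc.le) fun x => ?_
  have h1 := hb (M⁻¹ *ᵥ x.ofLp)
  rw [Matrix.mulVec_mulVec, Matrix.mul_nonsing_inv _ ((Matrix.isUnit_iff_isUnit_det _).1 hu),
    Matrix.one_mulVec, euclNorm_eq, euclNorm_eq] at h1
  rw [inv_mul_eq_div, le_div_iff₀ hc, mul_comm]
  exact h1

/-- Suppose `Σ_ψ` is positive definite with smallest eigenvalue
`λ_min > 0`.  Then for every `θ ∈ ℝ^d` the matrix `A(θ)` is invertible,
`‖A(θ) v‖ ≥ (1 − β) λ_min ‖v‖` for all `v`, and the family of inverses is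
uniformly bounded in operator norm: `‖A(θ)⁻¹‖_op ≤ ((1 − β) λ_min)⁻¹`. -/
theorem Atheta_invertible_uniform_inverse_bound
    {X : Type*} [MeasurableSpace X] {d : ℕ}
    (P : Kernel X X) [IsMarkovKernel P]
    (π : Measure X) [IsProbabilityMeasure π]
    (hinv : π.bind (fun x => P x) = π)
    (β : ℝ) (hβ : β ∈ Set.Ioo (0 : ℝ) 1)
    (cs : X → ℝ) (hcsm : Measurable cs)
    (ψ : X → Fin d → ℝ) (hψm : Measurable ψ)
    (hψ2 : ∀ i, MemLp (fun x => ψ x i) 2 π)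
    (A : (Fin d → ℝ) → Matrix (Fin d) (Fin d) ℝ)
    (hA : ∀ θ i j, A θ i j =
      ∫ x, ∫ y, ψ x i * (β * (if θ ⬝ᵥ ψ y < cs y then ψ y j else 0) - ψ x j)
        ∂(P x) ∂π)
    (Sψ : Matrix (Fin d) (Fin d) ℝ)
    (hSψ : ∀ i j, Sψ i j = ∫ x, ψ x i * ψ x j ∂π)
    (hpd : Sψ.PosDef)
    (lammin : ℝ) (hlammin : IsLeast (spectrum ℝ Sψ) lammin)
    (hlampos : 0 < lammin) :
    ∀ θ : Fin d → ℝ,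
      IsUnit (A θ) ∧
      (∀ v : Fin d → ℝ, (1 - β) * lammin * euclNorm v ≤ euclNorm (A θ *ᵥ v)) ∧
      ‖(Matrix.toEuclideanCLM (𝕜 := ℝ) (n := Fin d)) (A θ)⁻¹‖ ≤
        ((1 - β) * lammin)⁻¹ := by
  intro θ
  have hβ0 := hβ.1
  have hβ1 := hβ.2
  refine mat_conclusion (A θ) ((1 - β) * lammin) (mul_pos (by linarith) hlampos) fun v => ?_
  have mp1 : MeasurePreserving (Prod.fst : X × X → X) (π ⊗ₘ P) π :=
    ⟨measurable_fst, Measure.fst_compProd π P⟩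
  have mp2 : MeasurePreserving (Prod.snd : X × X → X) (π ⊗ₘ P) π :=
    ⟨measurable_snd, (Measure.snd_compProd π P).trans hinv⟩
  have hψi : ∀ i, Measurable fun x => ψ x i := fun i => (measurable_pi_apply i).comp hψm
  set T : Set X := {y | θ ⬝ᵥ ψ y < cs y} with hT
  have hTm : MeasurableSet T := by
    refine measurableSet_lt ?_ hcsm
    simp only [dotProduct]
    exact Finset.measurable_sum _ fun i _ => (hψi i).const_mul _
  have hind : ∀ j, MemLp (fun y => if θ ⬝ᵥ ψ y < cs y then ψ y j else 0) 2 π := fun j =>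
    (hψ2 j).indicator hTm
  set F : Fin d → X × X → ℝ := fun i z => ψ z.1 i with hFdef
  set G : Fin d → X × X → ℝ := fun j z =>
    β * (if θ ⬝ᵥ ψ z.2 < cs z.2 then ψ z.2 j else 0) - ψ z.1 j with hGdef
  have hF : ∀ i, MemLp (F i) 2 (π ⊗ₘ P) := fun i => (hψ2 i).comp_measurePreserving mp1
  have hG : ∀ i, MemLp (G i) 2 (π ⊗ₘ P) := fun i =>
    (((hind i).comp_measurePreserving mp2).const_mul β).sub (hF i)
  have hM : ∀ i j, A θ i j = ∫ z, F i z * G j z ∂(π ⊗ₘ P) := by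
    intro i j
    rw [hA, Measure.integral_compProd]
    exact MemLp.integrable_mul (p := 2) (q := 2) (hF i) (hG j)
  have hAq := quad_eq_integral (π ⊗ₘ P) F G (A θ) hF hG hM v
  have hSq := quad_eq_integral π (fun i x => ψ x i) (fun i x => ψ x i) Sψ hψ2 hψ2 hSψ v
  set u : X → ℝ := fun x => ∑ i, v i * ψ x i with hu
  have hu2 : MemLp u 2 π := memLp_finsetSum _ fun i _ => (hψ2 i).const_mul _
  have hum : Measurable u := Finset.measurable_sum _ fun i _ => (hψi i).const_mul _
  have huu : Integrable (fun x => u x * u x) π :=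
    MemLp.integrable_mul (p := 2) (q := 2) hu2 hu2
  have i1 : Integrable (fun z : X × X => u z.1 * u z.1) (π ⊗ₘ P) :=
    mp1.integrable_comp_of_integrable huu
  have i2 : Integrable (fun z : X × X => u z.2 * u z.2) (π ⊗ₘ P) :=
    mp2.integrable_comp_of_integrable huu
  have e1 : ∫ z : X × X, u z.1 * u z.1 ∂(π ⊗ₘ P) = ∫ x, u x * u x ∂π := by
    have hm : AEStronglyMeasurable (fun x => u x * u x) (Measure.map Prod.fst (π ⊗ₘ P)) := 
      (hum.mul hum).aestronglyMeasurable
    rw [← integral_map mp1.measurable.aemeasurable hm, mp1.map_eq]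
  have e2 : ∫ z : X × X, u z.2 * u z.2 ∂(π ⊗ₘ P) = ∫ x, u x * u x ∂π := by
    have hm : AEStronglyMeasurable (fun x => u x * u x) (Measure.map Prod.snd (π ⊗ₘ P)) := 
      (hum.mul hum).aestronglyMeasurable
    rw [← integral_map mp2.measurable.aemeasurable hm, mp2.map_eq]
  have hle : v ⬝ᵥ (A θ *ᵥ v) ≤
      ∫ z : X × X, ((β / 2 - 1) * (u z.1 * u z.1) + β / 2 * (u z.2 * u z.2)) ∂(π ⊗ₘ P) := by
    rw [hAq]
    refine integral_mono ?_ ((i1.const_mul _).add (i2.const_mul _)) fun z => ?_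
    · exact MemLp.integrable_mul (p := 2) (q := 2)
        (memLp_finsetSum _ fun i _ => (hF i).const_mul _)
        (memLp_finsetSum _ fun i _ => (hG i).const_mul _)
    · have hf : ∑ i, v i * F i z = u z.1 := rfl
      have hg : ∑ j, v j * G j z = β * (if θ ⬝ᵥ ψ z.2 < cs z.2 then u z.2 else 0) - u z.1 := by
        simp only [hGdef, hu]
        split_ifs
        · rw [Finset.mul_sum, ← Finset.sum_sub_distrib]
          exact Finset.sum_congr rfl fun i _ => by ring
        · simp
      simp only [hf, hg]
      split_ifs
      · nlinarith [mul_nonneg hβ0.le (sq_nonneg (u z.1 - u z.2))]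
      · nlinarith [mul_nonneg hβ0.le (sq_nonneg (u z.1)), mul_nonneg hβ0.le (sq_nonneg (u z.2))]
  rw [integral_add (i1.const_mul _) (i2.const_mul _), integral_const_mul, integral_const_mul,
    e1, e2] at hle
  have hl := lammin_quad Sψ hpd lammin hlammin v
  rw [hSq] at hl
  change _ ≤ ∫ x, u x * u x ∂π at hl
  have := mul_le_mul_of_nonneg_left hl (by linarith : (0:ℝ) ≤ 1 - β)
  linarith
end

section
/- The map θ ↦ b(θ) = −A(θ)θ − β c̄_s(θ) is Lipschitz continuous on ℝ^d: for all θ¹, θ² ∈ ℝ^d, ‖b(θ¹) − b(θ²)‖ ≤ (1 + β) (∫ ‖ψ(x)‖² π(dx)) ‖θ¹ − θ²‖. -/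
open MeasureTheory ProbabilityTheory Matrix

theorem euclNorm_nonneg' {d : ℕ} (v : Fin d → ℝ) : 0 ≤ euclNorm v := Real.sqrt_nonneg _

theorem euclNorm_sq' {d : ℕ} (v : Fin d → ℝ) : euclNorm v ^ 2 = ∑ i, v i ^ 2 :=
  Real.sq_sqrt (Finset.sum_nonneg fun i _ => sq_nonneg _)

theorem abs_dot_le' {d : ℕ} (v w : Fin d → ℝ) : |v ⬝ᵥ w| ≤ euclNorm v * euclNorm w := by
  apply abs_le_of_sq_le_sq _ (mul_nonneg (euclNorm_nonneg' v) (euclNorm_nonneg' w))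
  rw [mul_pow, euclNorm_sq', euclNorm_sq']
  exact Finset.sum_mul_sq_le_sq_mul_sq _ _ _

theorem abs_coord_le' {d : ℕ} (v : Fin d → ℝ) (i : Fin d) : |v i| ≤ euclNorm v := by
  apply abs_le_of_sq_le_sq _ (euclNorm_nonneg' v)
  rw [euclNorm_sq']
  exact Finset.single_le_sum (f := fun i => v i ^ 2) (fun i _ => sq_nonneg _) (Finset.mem_univ i)

theorem measurable_euclNorm' {d : ℕ} : Measurable (euclNorm (d := d)) := by
  unfold euclNorm
  fun_prop

theorem measurable_dot' {X : Type*} [MeasurableSpace X] {d : ℕ} (θ : Fin d → ℝ)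
    {ψ : X → Fin d → ℝ} (hψm : Measurable ψ) : Measurable fun x => θ ⬝ᵥ ψ x := by
  unfold dotProduct
  fun_prop

theorem abs_min_sub_le' (c s t : ℝ) : |min c s - min c t| ≤ |s - t| := by
  have := abs_min_sub_min_le_max c s c t
  simpa using this

/-- The map `θ ↦ b(θ) = −A(θ)θ − β c̄_s(θ)` is Lipschitz on `ℝ^d`:
for all `θ¹, θ²`, `‖b(θ¹) − b(θ²)‖ ≤ (1 + β) (∫ ‖ψ(x)‖² π(dx)) ‖θ¹ − θ²‖`. -/
theorem b_theta_lipschitz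
    {X : Type*} [MeasurableSpace X] {d : ℕ}
    (P : Kernel X X) [IsMarkovKernel P]
    (π : Measure X) [IsProbabilityMeasure π]
    (hinv : π.bind (fun x => P x) = π)
    (β : ℝ) (hβ : β ∈ Set.Ioo (0 : ℝ) 1)
    (c cs : X → ℝ) (hcm : Measurable c) (hcsm : Measurable cs)
    (hc2 : MemLp c 2 π) (hcs2 : MemLp cs 2 π)
    (ψ : X → Fin d → ℝ) (hψm : Measurable ψ)
    (hψb : ∃ C : ℝ, ∀ x, euclNorm (ψ x) ≤ C)
    (A : (Fin d → ℝ) → Matrix (Fin d) (Fin d) ℝ)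
    (hA : ∀ θ i j, A θ i j =
      ∫ x, ∫ y, ψ x i * (β * (if θ ⬝ᵥ ψ y < cs y then ψ y j else 0) - ψ x j)
        ∂(P x) ∂π)
    (cbar : (Fin d → ℝ) → Fin d → ℝ)
    (hcbar : ∀ θ i, cbar θ i =
      ∫ x, ∫ y, ψ x i * (if cs y ≤ θ ⬝ᵥ ψ y then cs y else 0) ∂(P x) ∂π)
    (b : (Fin d → ℝ) → Fin d → ℝ)
    (hbdef : ∀ θ, b θ = -(A θ *ᵥ θ) - β • cbar θ)
    (θ₁ θ₂ : Fin d → ℝ) :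
    euclNorm (b θ₁ - b θ₂) ≤
      (1 + β) * (∫ x, euclNorm (ψ x) ^ 2 ∂π) * euclNorm (θ₁ - θ₂) := by
  obtain ⟨hβ0, hβ1⟩ := hβ
  obtain ⟨C, hC⟩ := hψb
  set μ : Measure (X × X) := π ⊗ₘ P with hμ
  have hfst : μ.map Prod.fst = π := Measure.fst_compProd π P
  have hsnd : μ.map Prod.snd = π := (Measure.snd_compProd π P).trans hinv
  have hψi : ∀ i, Measurable fun x => ψ x i := fun i => (measurable_pi_apply i).comp hψm
  have hψb : ∀ x i, |ψ x i| ≤ C := fun x i => (abs_coord_le' _ i).trans (hC x)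
  have hcsI : Integrable cs π := hcs2.integrable (by norm_num)
  have hcsI2 : Integrable (fun z : X × X => cs z.2) μ := by
    rw [← hsnd] at hcsI
    exact hcsI.comp_measurable measurable_snd
  have hbdd : ∀ (i : Fin d) (g : X × X → ℝ), Integrable g μ →
      Integrable (fun z : X × X => ψ z.1 i * g z) μ := fun i g hg =>
    hg.bdd_mul (c := C) ((hψi i).comp measurable_fst).aestronglyMeasurable
      (Filter.Eventually.of_forall fun z => hψb z.1 i)
  have hψI1 : ∀ i, Integrable (fun z : X × X => ψ z.1 i) μ := fun i =>
    Integrable.of_bound ((hψi i).comp measurable_fst).aestronglyMeasurable C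
      (Filter.Eventually.of_forall fun z => hψb z.1 i)
  have hψI2 : ∀ i, Integrable (fun z : X × X => ψ z.2 i) μ := fun i =>
    Integrable.of_bound ((hψi i).comp measurable_snd).aestronglyMeasurable C
      (Filter.Eventually.of_forall fun z => hψb z.2 i)
  have hdm := fun θ : Fin d → ℝ => measurable_dot' θ hψm
  have hS1 : ∀ θ, MeasurableSet {z : X × X | θ ⬝ᵥ ψ z.2 < cs z.2} := fun θ =>
    measurableSet_lt ((hdm θ).comp measurable_snd) (hcsm.comp measurable_snd)
  have hS2 : ∀ θ, MeasurableSet {z : X × X | cs z.2 ≤ θ ⬝ᵥ ψ z.2} := fun θ =>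
    measurableSet_le (hcsm.comp measurable_snd) ((hdm θ).comp measurable_snd)
  have hI1 : ∀ θ j, Integrable (fun z : X × X => if θ ⬝ᵥ ψ z.2 < cs z.2 then ψ z.2 j else 0) μ :=
    fun θ j => (hψI2 j).indicator (hS1 θ)
  have hI2 : ∀ θ, Integrable (fun z : X × X => if cs z.2 ≤ θ ⬝ᵥ ψ z.2 then cs z.2 else 0) μ :=
    fun θ => hcsI2.indicator (hS2 θ)
  have hIA : ∀ θ i j, Integrable (fun z : X × X =>
      ψ z.1 i * (β * (if θ ⬝ᵥ ψ z.2 < cs z.2 then ψ z.2 j else 0) - ψ z.1 j)) μ :=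
    fun θ i j => hbdd i _ (((hI1 θ j).const_mul β).sub (hψI1 j))
  have hIc : ∀ θ i, Integrable (fun z : X × X =>
      ψ z.1 i * (if cs z.2 ≤ θ ⬝ᵥ ψ z.2 then cs z.2 else 0)) μ :=
    fun θ i => hbdd i _ (hI2 θ)
  have hA' : ∀ θ i j, A θ i j = ∫ z, ψ z.1 i *
      (β * (if θ ⬝ᵥ ψ z.2 < cs z.2 then ψ z.2 j else 0) - ψ z.1 j) ∂μ := fun θ i j => by
    rw [hA, hμ, Measure.integral_compProd (hIA θ i j)]
  have hc' : ∀ θ i, cbar θ i = ∫ z, ψ z.1 i *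
      (if cs z.2 ≤ θ ⬝ᵥ ψ z.2 then cs z.2 else 0) ∂μ := fun θ i => by
    rw [hcbar, hμ, Measure.integral_compProd (hIc θ i)]
  have hdI1 : ∀ θ, Integrable (fun z : X × X => θ ⬝ᵥ ψ z.1) μ := fun θ =>
    integrable_finsetSum _ fun j _ => (hψI1 j).const_mul (θ j)
  have hdI2 : ∀ θ, Integrable (fun z : X × X => θ ⬝ᵥ ψ z.2) μ := fun θ =>
    integrable_finsetSum _ fun j _ => (hψI2 j).const_mul (θ j)
  let H : (Fin d → ℝ) → X × X → ℝ := fun θ z => θ ⬝ᵥ ψ z.1 - β * min (cs z.2) (θ ⬝ᵥ ψ z.2)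
  have hH : ∀ θ, Integrable (H θ) μ := fun θ =>
    (hdI1 θ).sub ((hcsI2.inf (hdI2 θ)).const_mul β)
  have hb : ∀ θ i, b θ i = ∫ z, ψ z.1 i * H θ z ∂μ := by
    intro θ i
    have e1 : (A θ *ᵥ θ) i = ∫ z, ∑ j, ψ z.1 i *
        (β * (if θ ⬝ᵥ ψ z.2 < cs z.2 then ψ z.2 j else 0) - ψ z.1 j) * θ j ∂μ := by
      rw [integral_finsetSum _ fun j _ => (hIA θ i j).mul_const (θ j)]
      simp only [mulVec, dotProduct, integral_mul_const]
      exact Finset.sum_congr rfl fun j _ => by rw [hA']; rfl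
    have iA : Integrable (fun z : X × X => ∑ j, ψ z.1 i *
        (β * (if θ ⬝ᵥ ψ z.2 < cs z.2 then ψ z.2 j else 0) - ψ z.1 j) * θ j) μ :=
      integrable_finsetSum _ fun j _ => (hIA θ i j).mul_const (θ j)
    rw [hbdef]
    simp only [Pi.sub_apply, Pi.neg_apply, Pi.smul_apply, smul_eq_mul]
    rw [e1, hc', ← integral_const_mul, ← integral_neg, ← integral_sub (by exact iA.neg) ((hIc θ i).const_mul β)]
    refine integral_congr_ae (Filter.Eventually.of_forall fun z => ?_)
    have e2 : ∑ j, ψ z.1 i *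
        (β * (if θ ⬝ᵥ ψ z.2 < cs z.2 then ψ z.2 j else 0) - ψ z.1 j) * θ j =
        ψ z.1 i * (β * (if θ ⬝ᵥ ψ z.2 < cs z.2 then θ ⬝ᵥ ψ z.2 else 0) - θ ⬝ᵥ ψ z.1) := by
      split_ifs
      · simp only [dotProduct, Finset.mul_sum, ← Finset.sum_sub_distrib]
        exact Finset.sum_congr rfl fun j _ => by ring
      · simp only [dotProduct, mul_zero, zero_sub, ← Finset.sum_neg_distrib, Finset.mul_sum]
        exact Finset.sum_congr rfl fun j _ => by ring
    simp only [e2, H]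
    rcases lt_or_ge (θ ⬝ᵥ ψ z.2) (cs z.2) with h | h
    · rw [if_pos h, if_neg (not_le.2 h), min_eq_right h.le]; ring
    · rw [if_neg (not_lt.2 h), if_pos h, min_eq_left h]; ring
  set v := b θ₁ - b θ₂ with hv
  set δ := θ₁ - θ₂ with hδ
  have hN : Measurable fun x => euclNorm (ψ x) ^ 2 := (measurable_euclNorm'.comp hψm).pow_const 2
  have hNI : Integrable (fun x => euclNorm (ψ x) ^ 2) π :=
    Integrable.of_bound hN.aestronglyMeasurable (C ^ 2) (Filter.Eventually.of_forall fun x => by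
      rw [Real.norm_eq_abs, abs_of_nonneg (sq_nonneg _)]
      exact pow_le_pow_left₀ (euclNorm_nonneg' _) (hC x) 2)
  have hN1 : Integrable (fun z : X × X => euclNorm (ψ z.1) ^ 2) μ :=
    Integrable.comp_measurable (g := fun x => euclNorm (ψ x) ^ 2) (by rw [hfst]; exact hNI)
      measurable_fst
  have hN2 : Integrable (fun z : X × X => euclNorm (ψ z.2) ^ 2) μ :=
    Integrable.comp_measurable (g := fun x => euclNorm (ψ x) ^ 2) (by rw [hsnd]; exact hNI)
      measurable_snd
  have hE1 : ∫ z, euclNorm (ψ z.1) ^ 2 ∂μ = ∫ x, euclNorm (ψ x) ^ 2 ∂π := by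
    conv_rhs => rw [← hfst]
    rw [integral_map measurable_fst.aemeasurable hN.aestronglyMeasurable]
  have hE2 : ∫ z, euclNorm (ψ z.2) ^ 2 ∂μ = ∫ x, euclNorm (ψ x) ^ 2 ∂π := by
    conv_rhs => rw [← hsnd]
    rw [integral_map measurable_snd.aemeasurable hN.aestronglyMeasurable]
  set S := ∫ x, euclNorm (ψ x) ^ 2 ∂π with hS
  have hS0 : 0 ≤ S := integral_nonneg fun x => sq_nonneg _
  have hD : ∀ i, Integrable (fun z => v i * (ψ z.1 i * (H θ₁ z - H θ₂ z))) μ := fun i =>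
    (hbdd i _ ((hH θ₁).sub (hH θ₂))).const_mul (v i)
  have hvsq : euclNorm v ^ 2 = ∫ z, ∑ i, v i * (ψ z.1 i * (H θ₁ z - H θ₂ z)) ∂μ := by
    rw [euclNorm_sq', integral_finsetSum _ fun i _ => hD i]
    refine Finset.sum_congr rfl fun i _ => ?_
    rw [integral_const_mul, sq]
    congr 1
    rw [hv, Pi.sub_apply, hb, hb, ← integral_sub (hbdd i _ (hH θ₁)) (hbdd i _ (hH θ₂))]
    simp only [mul_sub]
  have hpt : ∀ z : X × X, ∑ i, v i * (ψ z.1 i * (H θ₁ z - H θ₂ z)) ≤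
      (euclNorm v * euclNorm δ) * ((1 + β / 2) * euclNorm (ψ z.1) ^ 2 +
        β / 2 * euclNorm (ψ z.2) ^ 2) := by
    intro z
    have e : ∑ i, v i * (ψ z.1 i * (H θ₁ z - H θ₂ z)) = (v ⬝ᵥ ψ z.1) * (H θ₁ z - H θ₂ z) := by
      simp only [dotProduct, Finset.sum_mul, mul_assoc]
    have h1 := abs_dot_le' v (ψ z.1)
    have h2 := abs_dot_le' δ (ψ z.1)
    have h3 := abs_dot_le' δ (ψ z.2)
    have h4 := abs_min_sub_le' (cs z.2) (θ₁ ⬝ᵥ ψ z.2) (θ₂ ⬝ᵥ ψ z.2)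
    rw [← sub_dotProduct, ← hδ] at h4
    have h5 : |H θ₁ z - H θ₂ z| ≤ euclNorm δ * (euclNorm (ψ z.1) + β * euclNorm (ψ z.2)) := by
      have e5 : H θ₁ z - H θ₂ z = δ ⬝ᵥ ψ z.1 -
          β * (min (cs z.2) (θ₁ ⬝ᵥ ψ z.2) - min (cs z.2) (θ₂ ⬝ᵥ ψ z.2)) := by
        simp only [H, hδ, sub_dotProduct]; ring
      rw [e5]
      refine (abs_sub _ _).trans ?_
      rw [abs_mul, abs_of_pos hβ0]
      have := mul_le_mul_of_nonneg_left (h4.trans h3) hβ0.le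
      linarith
    rw [e]
    refine (le_abs_self _).trans ?_
    rw [abs_mul]
    refine (mul_le_mul h1 h5 (abs_nonneg _)
      (mul_nonneg (euclNorm_nonneg' _) (euclNorm_nonneg' _))).trans ?_
    have h6 : euclNorm (ψ z.1) * (euclNorm (ψ z.1) + β * euclNorm (ψ z.2)) ≤
        (1 + β / 2) * euclNorm (ψ z.1) ^ 2 + β / 2 * euclNorm (ψ z.2) ^ 2 := by
      have := mul_nonneg hβ0.le (sq_nonneg (euclNorm (ψ z.1) - euclNorm (ψ z.2)))
      nlinarith
    have := mul_le_mul_of_nonneg_left h6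
      (mul_nonneg (euclNorm_nonneg' v) (euclNorm_nonneg' δ))
    linarith
  have hfin : euclNorm v ^ 2 ≤ (euclNorm v * euclNorm δ) * ((1 + β) * S) := by
    rw [hvsq]
    refine (integral_mono (integrable_finsetSum _ fun i _ => hD i)
      (((hN1.const_mul (1 + β / 2)).add (hN2.const_mul (β / 2))).const_mul _) hpt).trans ?_
    rw [integral_const_mul, integral_add' (hN1.const_mul (1 + β / 2)) (hN2.const_mul (β / 2)),
      integral_const_mul, integral_const_mul, hE1, hE2]
    apply le_of_eq
    ring
  rcases (euclNorm_nonneg' v).eq_or_lt with h0 | h0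
  · rw [← h0]
    exact mul_nonneg (mul_nonneg (by linarith) hS0) (euclNorm_nonneg' δ)
  · refine le_of_mul_le_mul_left ?_ h0
    linarith
end

section
/- For every R > 0 and every dimension d ≥ 1 there exists L < ∞ such that for all m ∈ ℝ^d with ‖m‖ ≤ R, the function g_m : ℝ^d → ℝ defined by g_m(θ) = N(⟨m,θ⟩, ‖θ‖²)((−∞, 1]) — the probability that a real Gaussian random variable with mean ⟨m,θ⟩ and variance ‖θ‖² is at most 1 (interpreted as 𝟙{⟨m,θ⟩ ≤ 1} when θ = 0) — is L-Lipschitz: |g_m(θ¹) − g_m(θ²)| ≤ L ‖θ¹ − θ²‖ for all θ¹, θ² ∈ ℝ^d. Equivalently, if Z is a Gaussian vector in ℝ^d with mean m and identity covariance, then θ ↦ Pr(⟨Z,θ⟩ ≤ 1) is L-Lipschitz, with L depending only on R and d. -/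
open MeasureTheory ProbabilityTheory

lemma aux_map (μ : ℝ) (s : NNReal) :
    gaussianReal μ (s ^ 2) = (gaussianReal 0 1).map (fun z => μ + s * z) := by
  have h1 := gaussianReal_map_const_mul (μ := 0) (v := 1) (s : ℝ)
  have h2 := gaussianReal_map_const_add (μ := (s : ℝ) * 0) (v := NNReal.mk ((s : ℝ) ^ 2) (sq_nonneg _) * 1) μ
  rw [← h1, Measure.map_map (by fun_prop) (by fun_prop)] at h2
  have h3 : (NNReal.mk ((s : ℝ) ^ 2) (sq_nonneg _) * 1 : NNReal) = s ^ 2 := by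
    ext; simp
  rw [h3] at h2
  simp only [mul_zero, zero_add] at h2
  rw [← h2]
  rfl

lemma aux_tail (μ : ℝ) (s : NNReal) (R : ℝ) (h : |μ| ≤ R * s) :
    1 - (gaussianReal μ (s ^ 2) (Set.Iic 1)).toReal ≤
      (R + ∫ z, |z| ∂(gaussianReal 0 1)) * s := by
  have hint : Integrable (fun z : ℝ => z) (gaussianReal 0 1) :=
    (memLp_id_gaussianReal (μ := 0) (v := 1) 1).integrable (by simp)
  have e1 : 1 - (gaussianReal μ (s ^ 2) (Set.Iic 1)).toReal
      = (gaussianReal 0 1).real {z | 1 < μ + s * z} := by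
    have h0 := prob_compl_eq_one_sub (μ := gaussianReal μ (s ^ 2)) (measurableSet_Iic (a := (1:ℝ)))
    have h0' := probReal_compl_eq_one_sub (μ := gaussianReal μ (s ^ 2))
      (measurableSet_Iic (a := (1:ℝ)))
    change 1 - (gaussianReal μ (s ^ 2)).real (Set.Iic 1) = _
    rw [← h0', aux_map, map_measureReal_apply (by fun_prop) (measurableSet_Iic.compl)]
    congr 1
    ext z
    simp
  rw [e1]
  have hi2 : Integrable (fun z : ℝ => |μ + s * z|) (gaussianReal 0 1) :=
    ((integrable_const μ).add (hint.const_mul (s : ℝ))).abs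
  have hm := mul_meas_ge_le_integral_of_nonneg (μ := gaussianReal 0 1)
    (f := fun z : ℝ => |μ + s * z|) (Filter.Eventually.of_forall fun z => abs_nonneg _) hi2 1
  have hsub : (gaussianReal 0 1).real {z | 1 < μ + s * z} ≤
      (gaussianReal 0 1).real {z | 1 ≤ |μ + s * z|} := by
    refine measureReal_mono ?_ (measure_ne_top _ _)
    intro z hz
    have hz' : 1 < μ + s * z := hz
    exact hz'.le.trans (le_abs_self _)
  have hle : ∫ z, |μ + s * z| ∂(gaussianReal 0 1) ≤
      ∫ z, (|μ| + s * |z|) ∂(gaussianReal 0 1) := by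
    apply integral_mono hi2 ((integrable_const _).add (hint.abs.const_mul _))
    intro z
    refine (abs_add_le _ _).trans ?_
    simp [abs_mul]
  rw [integral_add (integrable_const _) (hint.abs.const_mul _), integral_const_mul] at hle
  simp at hle
  rw [one_mul] at hm
  linarith

lemma aux_std (μ : ℝ) (s : NNReal) (hs : 0 < s) :
    (gaussianReal μ (s ^ 2) (Set.Iic 1)).toReal =
      (gaussianReal 0 1).real (Set.Iic ((1 - μ) / s)) := by
  change (gaussianReal μ (s ^ 2)).real (Set.Iic 1) = _
  rw [aux_map, map_measureReal_apply (by fun_prop) measurableSet_Iic]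
  congr 1
  ext z
  have : (0:ℝ) < s := hs
  simp only [Set.mem_preimage, Set.mem_Iic]
  rw [le_div_iff₀ this]
  constructor <;> intro h <;> linarith

lemma aux_lip (a b K : ℝ) (hab : a ≤ b) (hK : ∀ x, a ≤ x → Real.exp (-x ^ 2 / 2) ≤ K) :
    |(gaussianReal 0 1).real (Set.Iic a) - (gaussianReal 0 1).real (Set.Iic b)| ≤ K * (b - a) := by
  have hK0 : 0 ≤ K := (Real.exp_pos _).le.trans (hK a le_rfl)
  have h1 : (gaussianReal 0 1).real (Set.Iic b) - (gaussianReal 0 1).real (Set.Iic a)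
      = (gaussianReal 0 1).real (Set.Ioc a b) := by
    rw [← measureReal_sdiff (Set.Iic_subset_Iic.2 hab) measurableSet_Iic]
    congr 1
    ext x; simp [and_comm]
  rw [abs_sub_comm, h1, abs_of_nonneg measureReal_nonneg]
  have h2 : gaussianReal 0 1 (Set.Ioc a b) ≤ ENNReal.ofReal (K * (b - a)) := by
    rw [gaussianReal_apply _ one_ne_zero, ENNReal.ofReal_mul hK0, ← Real.volume_Ioc,
      ← setLIntegral_const]
    apply setLIntegral_mono measurable_const
    intro x hx
    apply ENNReal.ofReal_le_ofReal
    refine le_trans ?_ (hK x hx.1.le)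
    rw [gaussianPDFReal]
    simp only [NNReal.coe_one, mul_one, sub_zero]
    apply mul_le_of_le_one_left (Real.exp_pos _).le
    apply inv_le_one_of_one_le₀
    rw [Real.one_le_sqrt]
    linarith [Real.pi_gt_three]
  exact ENNReal.toReal_le_of_le_ofReal (mul_nonneg hK0 (by linarith)) h2

lemma aux_exp (R t x : ℝ) (ht : 0 ≤ t) (h : t - R ≤ x) (hR : 0 < R) :
    Real.exp (-x ^ 2 / 2) * (2 * t ^ 2 + 2 * R * t) ≤ 12 + 7 * R ^ 2 := by
  have e1 : Real.exp (-x ^ 2 / 2) * (x ^ 2 / 2 + 1) ≤ 1 := by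
    have := Real.add_one_le_exp (x ^ 2 / 2)
    calc _ ≤ Real.exp (-x ^ 2 / 2) * Real.exp (x ^ 2 / 2) := by gcongr
      _ = 1 := by rw [← Real.exp_add]; ring_nf; simp
  have h2 : t ^ 2 ≤ 2 * x ^ 2 + 2 * R ^ 2 := by nlinarith [sq_nonneg (x - R)]
  have h3 : 2 * t ^ 2 + 2 * R * t ≤ (12 + 7 * R ^ 2) * (x ^ 2 / 2 + 1) := by
    nlinarith [sq_nonneg (t - R), mul_nonneg (sq_nonneg R) (sq_nonneg x)]
  have h4 := mul_le_mul_of_nonneg_left h3 (Real.exp_pos (-x ^ 2 / 2)).le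
  nlinarith [sq_nonneg R]

lemma aux_main {d : ℕ} (R : ℝ) (hR : 0 < R) (m : EuclideanSpace ℝ (Fin d)) (hm : ‖m‖ ≤ R)
    (θ₁ θ₂ : EuclideanSpace ℝ (Fin d)) (h12 : ‖θ₁‖ ≤ ‖θ₂‖) :
    |(gaussianReal (inner ℝ m θ₁ : ℝ) (‖θ₁‖₊ ^ 2) (Set.Iic 1)).toReal -
            (gaussianReal (inner ℝ m θ₂ : ℝ) (‖θ₂‖₊ ^ 2) (Set.Iic 1)).toReal| ≤
      (4 * (R + ∫ z, |z| ∂(gaussianReal 0 1)) + (12 + 7 * R ^ 2)) * ‖θ₁ - θ₂‖ := by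
  set C := R + ∫ z, |z| ∂(gaussianReal 0 1) with hC
  have hC0 : 0 ≤ C := add_nonneg hR.le (integral_nonneg fun z => abs_nonneg z)
  have hin : ∀ θ : EuclideanSpace ℝ (Fin d), |inner ℝ m θ| ≤ R * ‖θ‖ := fun θ =>
    (abs_real_inner_le_norm m θ).trans (by gcongr)
  have hδ : ‖θ₂‖ - ‖θ₁‖ ≤ ‖θ₁ - θ₂‖ := by
    rw [norm_sub_rev]; exact norm_sub_norm_le _ _
  rcases lt_or_ge (2 * ‖θ₁‖) ‖θ₂‖ with hc | hc
  · have t1 := aux_tail (inner ℝ m θ₁) ‖θ₁‖₊ R (hin θ₁)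
    have t2 := aux_tail (inner ℝ m θ₂) ‖θ₂‖₊ R (hin θ₂)
    rw [← hC, coe_nnnorm] at t1 t2
    have u1 : (gaussianReal (inner ℝ m θ₁ : ℝ) (‖θ₁‖₊ ^ 2) (Set.Iic 1)).toReal ≤ 1 :=
      measureReal_le_one
    have u2 : (gaussianReal (inner ℝ m θ₂ : ℝ) (‖θ₂‖₊ ^ 2) (Set.Iic 1)).toReal ≤ 1 :=
      measureReal_le_one
    have hb : C * ‖θ₂‖ ≤ C * (2 * ‖θ₁ - θ₂‖) := by
      apply mul_le_mul_of_nonneg_left _ hC0; linarith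
    have hb1 : C * ‖θ₁‖ ≤ C * ‖θ₂‖ := by gcongr
    have hp : 0 ≤ (12 + 7 * R ^ 2) * ‖θ₁ - θ₂‖ := by positivity
    have hp2 : 0 ≤ C * ‖θ₁ - θ₂‖ := by positivity
    rw [abs_le]
    constructor <;> nlinarith
  · rcases (norm_nonneg θ₂).eq_or_lt with h0 | h0
    · have e2 : θ₂ = 0 := norm_eq_zero.1 h0.symm
      have e1 : θ₁ = 0 := norm_eq_zero.1 (le_antisymm (h0 ▸ h12) (norm_nonneg _))
      subst e1 e2
      simp
    have h01 : 0 < ‖θ₁‖ := by linarith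
    rw [aux_std _ _ (by exact_mod_cast h01), aux_std _ _ (by exact_mod_cast h0)]
    simp only [coe_nnnorm]
    set s := ‖θ₁‖
    set r := ‖θ₂‖
    set δ := ‖θ₁ - θ₂‖
    set t := r⁻¹ with ht
    have ht0 : 0 < t := inv_pos.2 h0
    have htr : t * r = 1 := inv_mul_cancel₀ h0.ne'
    have hst : s⁻¹ ≤ 2 * t := by
      rw [inv_le_iff_one_le_mul₀ h01]; nlinarith
    have hts : t ≤ s⁻¹ := inv_anti₀ h01 h12
    set a := (1 - inner ℝ m θ₁) / s with ha
    set b := (1 - inner ℝ m θ₂) / r with hb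
    have hd0 : 0 ≤ δ := norm_nonneg _
    have hs1 : s⁻¹ * s = 1 := inv_mul_cancel₀ h01.ne'
    have ha1 : t - R ≤ a := by
      have := (abs_le.1 (hin θ₁)).2
      rw [ha, div_eq_mul_inv]
      have h5 := mul_le_mul_of_nonneg_right this (inv_pos.2 h01).le
      nlinarith
    have hb1 : t - R ≤ b := by
      have := (abs_le.1 (hin θ₂)).2
      rw [hb, div_eq_mul_inv]
      have h5 := mul_le_mul_of_nonneg_right this ht0.le
      nlinarith
    have key : |a - b| ≤ δ * (2 * t ^ 2 + 2 * R * t) := by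
      have q1 : s⁻¹ - t ≤ 2 * t ^ 2 * δ := by
        have : s⁻¹ - t = s⁻¹ * t * (r - s) := by
          linear_combination (-s⁻¹) * htr + t * hs1
        rw [this]
        calc s⁻¹ * t * (r - s) ≤ (2 * t) * t * δ := by
              gcongr
          _ = _ := by ring
      have q2 : a - b = (s⁻¹ - t) - t * inner ℝ m (θ₁ - θ₂) - (s⁻¹ - t) * inner ℝ m θ₁ := by
        rw [ha, hb, inner_sub_right, div_eq_mul_inv, div_eq_mul_inv]
        ring
      have q3 : |t * inner ℝ m (θ₁ - θ₂)| ≤ t * (R * δ) := by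
        rw [abs_mul, abs_of_pos ht0]
        gcongr; exact hin _
      have q4 : |(s⁻¹ - t) * inner ℝ m θ₁| ≤ t * (R * δ) := by
        rw [abs_mul, abs_of_nonneg (by linarith)]
        calc (s⁻¹ - t) * |inner ℝ m θ₁| ≤ (s⁻¹ - t) * (R * s) :=
              mul_le_mul_of_nonneg_left (hin _) (by linarith)
          _ = t * (R * (r - s)) := by
              linear_combination R * hs1 - R * htr
          _ ≤ _ := by gcongr
      rw [abs_le] at q3 q4
      rw [q2, abs_le]
      constructor <;> nlinarith
    set D := 2 * t ^ 2 + 2 * R * t with hD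
    have hDp : 0 < D := by positivity
    have hexp : ∀ x, t - R ≤ x → Real.exp (-x ^ 2 / 2) ≤ (12 + 7 * R ^ 2) / D := by
      intro x hx
      rw [le_div_iff₀ hDp]
      exact aux_exp R t x ht0.le hx hR
    have fin : |(gaussianReal 0 1).real (Set.Iic a) - (gaussianReal 0 1).real (Set.Iic b)| ≤
        (12 + 7 * R ^ 2) / D * |a - b| := by
      rcases le_total a b with hab | hab
      · rw [abs_sub_comm a b, abs_of_nonneg (sub_nonneg.2 hab)]
        exact aux_lip a b _ hab fun x hx => hexp x (ha1.trans hx)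
      · rw [abs_of_nonneg (sub_nonneg.2 hab), abs_sub_comm]
        exact aux_lip b a _ hab fun x hx => hexp x (hb1.trans hx)
    calc _ ≤ (12 + 7 * R ^ 2) / D * |a - b| := fin
      _ ≤ (12 + 7 * R ^ 2) / D * (δ * D) := by gcongr
      _ = (12 + 7 * R ^ 2) * δ := by field_simp
      _ ≤ _ := by
        apply mul_le_mul_of_nonneg_right _ hd0
        linarith

/-- For every `R > 0` and every dimension `d ≥ 1` there exists
`L < ∞` such that for all `m ∈ ℝ^d` with `‖m‖ ≤ R`, the function
`g_m(θ) = N(⟨m,θ⟩, ‖θ‖²)((−∞, 1])` — the probability that a real Gaussian with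
mean `⟨m,θ⟩` and variance `‖θ‖²` is at most `1` (the Dirac case when `θ = 0`) —
is `L`-Lipschitz in `θ`.  Equivalently, for a Gaussian vector `Z` with mean `m`
and identity covariance, `θ ↦ Pr(⟨Z,θ⟩ ≤ 1)` is `L`-Lipschitz with `L`
depending only on `R` and `d`. -/
theorem gaussian_halfspace_prob_lipschitz
    (d : ℕ) (hd : 1 ≤ d) (R : ℝ) (hR : 0 < R) :
    ∃ L : ℝ, ∀ m : EuclideanSpace ℝ (Fin d), ‖m‖ ≤ R →
      ∀ θ₁ θ₂ : EuclideanSpace ℝ (Fin d),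
        |(gaussianReal (inner ℝ m θ₁ : ℝ) (‖θ₁‖₊ ^ 2) (Set.Iic 1)).toReal -
            (gaussianReal (inner ℝ m θ₂ : ℝ) (‖θ₂‖₊ ^ 2) (Set.Iic 1)).toReal| ≤
          L * ‖θ₁ - θ₂‖ := by
  refine ⟨4 * (R + ∫ z, |z| ∂(gaussianReal 0 1)) + (12 + 7 * R ^ 2), fun m hm θ₁ θ₂ => ?_⟩
  · rcases le_total ‖θ₁‖ ‖θ₂‖ with h | h
    · exact aux_main R hR m hm θ₁ θ₂ h
    · rw [abs_sub_comm, norm_sub_rev]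
      exact aux_main R hR m hm θ₂ θ₁ h
end

section
/- Assume: (a) ψ : X → ℝ^d is bounded measurable; (b) there exists θ_cs ∈ ℝ^d such that c_s(y) = θ_csᵀψ(y) + 1 for all y ∈ X; (c) for every x ∈ X, the image of P(x,·) under ψ is absolutely continuous with respect to the Gaussian measure on ℝ^d with mean ψ(x) and identity covariance, with density ℓ(z | x) satisfying ℓ(z | x) ≤ L for all z ∈ ℝ^d and x ∈ X, for some constant L < ∞. Then there exists a constant ℓ_M < ∞ such that for all x ∈ X and all θ¹, θ² ∈ ℝ^d, ‖ ∫ ψ(x) (𝟙{(θ¹)ᵀψ(y) < c_s(y)} − 𝟙{(θ²)ᵀψ(y) < c_s(y)}) ψ(y)ᵀ P(x,dy) ‖ ≤ ℓ_M ‖θ¹ − θ²‖. -/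
open MeasureTheory ProbabilityTheory Matrix

/-- The Frobenius norm of a `d × d` real matrix. -/
noncomputable def frobNorm {d : ℕ} (M : Matrix (Fin d) (Fin d) ℝ) : ℝ :=
  Real.sqrt (∑ i, ∑ j, M i j ^ 2)

lemma aux_gauss_interval (m u v : ℝ) :
    gaussianReal m 1 (Set.Icc u v) ≤ ENNReal.ofReal (v - u) := by
  rw [gaussianReal_of_var_ne_zero m one_ne_zero, withDensity_apply _ measurableSet_Icc]
  calc ∫⁻ a in Set.Icc u v, gaussianPDF m 1 a ≤ ∫⁻ a in Set.Icc u v, 1 := by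
        refine lintegral_mono fun a => ?_
        rw [gaussianPDF, ← ENNReal.ofReal_one]
        apply ENNReal.ofReal_le_ofReal
        rw [gaussianPDFReal]
        have h1 : (1:ℝ) ≤ √(2 * Real.pi * ((1:NNReal):ℝ)) := by
          rw [Real.one_le_sqrt]
          have := Real.pi_gt_three
          push_cast
          linarith
        have h2 : (√(2 * Real.pi * ((1:NNReal):ℝ)))⁻¹ ≤ 1 := inv_le_one_of_one_le₀ h1
        have h3 : Real.exp (-(a - m) ^ 2 / (2 * ((1:NNReal):ℝ))) ≤ 1 := by
          rw [Real.exp_le_one_iff]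
          push_cast
          nlinarith [sq_nonneg (a - m)]
        exact mul_le_one₀ h2 (Real.exp_pos _).le h3
    _ = ENNReal.ofReal (v - u) := by simp

lemma aux_slab {n : ℕ} (m b : Fin (n+1) → ℝ) (i : Fin (n+1)) (hb : b i ≠ 0) (ε : ℝ) :
    (Measure.pi fun i => gaussianReal (m i) 1) {z | |b ⬝ᵥ z - 1| ≤ ε} ≤
      ENNReal.ofReal (2 * ε / |b i|) := by
  have hmp := measurePreserving_piFinSuccAbove (fun i => gaussianReal (m i) 1) i
  set S : Set (ℝ × (Fin n → ℝ)) :=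
    {p | |b i * p.1 + ∑ j, b (i.succAbove j) * p.2 j - 1| ≤ ε} with hS
  have hSm : MeasurableSet S := by
    apply measurableSet_le _ measurable_const
    fun_prop
  have hpre : {z : Fin (n+1) → ℝ | |b ⬝ᵥ z - 1| ≤ ε} =
      (MeasurableEquiv.piFinSuccAbove (fun _ => ℝ) i) ⁻¹' S := by
    ext z
    simp only [hS, Set.mem_ofPred_eq, Set.mem_preimage, dotProduct,
      Fin.sum_univ_succAbove _ i]
    rfl
  rw [hpre, hmp.measure_preimage hSm.nullMeasurableSet, Measure.prod_apply_symm hSm]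
  calc _ ≤ ∫⁻ y, ENNReal.ofReal (2 * ε / |b i|) ∂(Measure.pi fun j => gaussianReal (m (i.succAbove j)) 1) := by
        refine lintegral_mono fun y => ?_
        set t := (1 - ∑ j, b (i.succAbove j) * y j) / b i with ht
        have hbp : 0 < |b i| := abs_pos.mpr hb
        have hsub : (fun x => (x, y)) ⁻¹' S ⊆ Set.Icc (t - ε / |b i|) (t + ε / |b i|) := by
          intro x hx
          simp only [hS, Set.mem_preimage, Set.mem_ofPred_eq] at hx
          have h1 : b i * x + ∑ j, b (i.succAbove j) * y j - 1 = b i * (x - t) := by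
            rw [ht]; field_simp; ring
          rw [h1, abs_mul, mul_comm, ← le_div_iff₀ hbp, abs_le] at hx
          constructor <;> linarith [hx.1, hx.2]
        refine (measure_mono hsub).trans ((aux_gauss_interval _ _ _).trans (le_of_eq ?_))
        congr 1; ring
    _ = _ := by simp

lemma aux_cs {d : ℕ} (u z : Fin d → ℝ) : u ⬝ᵥ z ≤ euclNorm u * euclNorm z :=
  Real.sum_mul_le_sqrt_mul_sqrt _ _ _

lemma aux_coord {d : ℕ} (z : Fin d → ℝ) (i : Fin d) : |z i| ≤ euclNorm z := by
  apply Real.abs_le_sqrt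
  exact Finset.single_le_sum (f := fun i => z i ^ 2) (fun _ _ => sq_nonneg _) (Finset.mem_univ i)

lemma aux_symm {d : ℕ} (u v : Fin d → ℝ) : euclNorm (u - v) = euclNorm (v - u) := by
  unfold euclNorm
  congr 1
  refine Finset.sum_congr rfl fun i _ => ?_
  simp only [Pi.sub_apply]; ring

lemma aux_nonneg {d : ℕ} (u : Fin d → ℝ) : 0 ≤ euclNorm u := Real.sqrt_nonneg _

lemma aux_core {X : Type*} [MeasurableSpace X] {d : ℕ}
    (μ : Measure X)
    (ψ : X → Fin d → ℝ) (hψm : Measurable ψ)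
    (C : ℝ) (hC : 0 < C) (hψb : ∀ x, euclNorm (ψ x) ≤ C)
    (cs : X → ℝ)
    (θcs : Fin d → ℝ) (hspan : ∀ y, cs y = θcs ⬝ᵥ ψ y + 1)
    (L : ℝ) (ℓ : (Fin d → ℝ) → ENNReal) (m : Fin d → ℝ)
    (hdens : Measure.map ψ μ =
      (Measure.pi fun i : Fin d => gaussianReal (m i) 1).withDensity ℓ)
    (hL : ∀ z, ℓ z ≤ ENNReal.ofReal L) (θ₁ θ₂ : Fin d → ℝ) :
    μ {y | θ₁ ⬝ᵥ ψ y < cs y ∧ ¬ θ₂ ⬝ᵥ ψ y < cs y} ≤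
      ENNReal.ofReal (max L 0 * (2 * C * (d * C)) * euclNorm (θ₁ - θ₂)) := by
  rcases Set.eq_empty_or_nonempty {y | θ₁ ⬝ᵥ ψ y < cs y ∧ ¬ θ₂ ⬝ᵥ ψ y < cs y} with h | ⟨y₀, hy₀⟩
  · rw [h]; simp
  set b := θ₂ - θcs with hb
  set e := euclNorm (θ₁ - θ₂) with he
  have he0 : 0 ≤ e := aux_nonneg _
  have hbig : 1 ≤ b ⬝ᵥ ψ y₀ := by
    have := hy₀.2
    rw [hspan] at this
    rw [hb, sub_dotProduct]; linarith
  obtain _ | n := d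
  · simp at hbig
    linarith
  obtain ⟨i, hi⟩ : ∃ i, 1 ≤ |b i| * (((n+1 : ℕ):ℝ) * C) := by
    have : ∑ _i : Fin (n+1), (1:ℝ) / ((n+1 : ℕ):ℝ) ≤ ∑ i, b i * ψ y₀ i := by
      refine le_trans (le_of_eq ?_) hbig
      simp only [Finset.sum_const, Finset.card_univ, Fintype.card_fin, nsmul_eq_mul]
      field_simp
    obtain ⟨i, -, hi⟩ := Finset.exists_le_of_sum_le Finset.univ_nonempty this
    refine ⟨i, ?_⟩
    have h1 : b i * ψ y₀ i ≤ |b i| * C := by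
      refine (le_abs_self _).trans ?_
      rw [abs_mul]
      exact mul_le_mul_of_nonneg_left ((aux_coord _ _).trans (hψb _)) (abs_nonneg _)
    have h2 := hi.trans h1
    rw [div_le_iff₀ (by positivity)] at h2
    linarith
  have hbi : b i ≠ 0 := by
    intro h0
    rw [h0] at hi; simp at hi; linarith
  have hbp : 0 < |b i| := abs_pos.mpr hbi
  set S : Set (Fin (n+1) → ℝ) := {z | |b ⬝ᵥ z - 1| ≤ C * e} with hS
  have hSm : MeasurableSet S := by
    apply measurableSet_le _ measurable_const
    unfold dotProduct
    fun_prop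
  have hsub : {y | θ₁ ⬝ᵥ ψ y < cs y ∧ ¬ θ₂ ⬝ᵥ ψ y < cs y} ⊆ ψ ⁻¹' S := by
    rintro y ⟨h1, h2⟩
    rw [hspan] at h1 h2
    have h3 := aux_cs (θ₂ - θ₁) (ψ y)
    rw [aux_symm, sub_dotProduct, ← he] at h3
    have h4 : e * euclNorm (ψ y) ≤ e * C := mul_le_mul_of_nonneg_left (hψb y) he0
    simp only [hS, Set.mem_preimage, Set.mem_ofPred_eq, hb, sub_dotProduct]
    rw [abs_le]
    have : 0 ≤ C * e := by positivity
    constructor <;> linarith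
  calc _ ≤ μ (ψ ⁻¹' S) := measure_mono hsub
    _ = Measure.map ψ μ S := (Measure.map_apply hψm hSm).symm
    _ = ∫⁻ z in S, ℓ z ∂(Measure.pi fun i => gaussianReal (m i) 1) := by
        rw [hdens, withDensity_apply _ hSm]
    _ ≤ ∫⁻ z in S, ENNReal.ofReal L ∂(Measure.pi fun i => gaussianReal (m i) 1) :=
        lintegral_mono fun z => hL z
    _ = ENNReal.ofReal L * (Measure.pi fun i => gaussianReal (m i) 1) S := by simp
    _ ≤ ENNReal.ofReal (max L 0) * ENNReal.ofReal (2 * (C * e) / |b i|) :=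
        mul_le_mul' (ENNReal.ofReal_le_ofReal (le_max_left _ _)) (aux_slab m b i hbi _)
    _ = ENNReal.ofReal (max L 0 * (2 * (C * e) / |b i|)) :=
        (ENNReal.ofReal_mul (le_max_right _ _)).symm
    _ ≤ _ := by
        apply ENNReal.ofReal_le_ofReal
        rw [mul_assoc]
        apply mul_le_mul_of_nonneg_left _ (le_max_right _ _)
        rw [div_le_iff₀ hbp]
        have : 0 ≤ 2 * (C * e) := by positivity
        nlinarith [mul_le_mul_of_nonneg_left hi this]

/-- Assume `ψ` is bounded measurable, `c_s(y) = θ_csᵀψ(y) + 1`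
for some `θ_cs`, and for every `x` the image of `P(x,·)` under `ψ` has a
density `ℓ(·|x)` bounded by `L` with respect to the Gaussian measure on `ℝ^d`
with mean `ψ(x)` and identity covariance.  Then there is `ℓ_M < ∞` such that
for all `x` and all `θ¹, θ²`,
`‖∫ ψ(x) (𝟙{θ¹ᵀψ(y) < c_s(y)} − 𝟙{θ²ᵀψ(y) < c_s(y)}) ψ(y)ᵀ P(x,dy)‖
  ≤ ℓ_M ‖θ¹ − θ²‖`. -/
theorem conditional_indicator_difference_lipschitz
    {X : Type*} [MeasurableSpace X] {d : ℕ}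
    (P : Kernel X X) [IsMarkovKernel P]
    (ψ : X → Fin d → ℝ) (hψm : Measurable ψ)
    (hψb : ∃ C : ℝ, ∀ x, euclNorm (ψ x) ≤ C)
    (cs : X → ℝ) (hcsm : Measurable cs)
    (θcs : Fin d → ℝ) (hspan : ∀ y, cs y = θcs ⬝ᵥ ψ y + 1)
    (L : ℝ) (ℓ : X → (Fin d → ℝ) → ENNReal)
    (hℓm : ∀ x, Measurable (ℓ x))
    (hdens : ∀ x, Measure.map ψ (P x) =
      (Measure.pi fun i : Fin d => gaussianReal (ψ x i) 1).withDensity (ℓ x))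
    (hL : ∀ x z, ℓ x z ≤ ENNReal.ofReal L) :
    ∃ ℓM : ℝ, ∀ (x : X) (θ₁ θ₂ : Fin d → ℝ),
      frobNorm (Matrix.of fun i j =>
        ∫ y, ψ x i *
          (((if θ₁ ⬝ᵥ ψ y < cs y then (1 : ℝ) else 0) -
            (if θ₂ ⬝ᵥ ψ y < cs y then (1 : ℝ) else 0)) * ψ y j) ∂(P x)) ≤
      ℓM * euclNorm (θ₁ - θ₂) := by
  obtain ⟨C₀, hC₀⟩ := hψb
  set C := |C₀| + 1 with hCdef
  have hC : 0 < C := by positivity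
  have hψC : ∀ x, euclNorm (ψ x) ≤ C := fun x =>
    (hC₀ x).trans (by linarith [le_abs_self C₀])
  set K := max L 0 * (2 * C * (d * C)) with hK
  have hK0 : 0 ≤ K := mul_nonneg (le_max_right _ _) (by positivity)
  refine ⟨d * (C * C * (2 * K)), fun x θ₁ θ₂ => ?_⟩
  set e := euclNorm (θ₁ - θ₂) with he
  have he0 : 0 ≤ e := aux_nonneg _
  set D : Set X := {y | θ₁ ⬝ᵥ ψ y < cs y ∧ ¬ θ₂ ⬝ᵥ ψ y < cs y} ∪
    {y | θ₂ ⬝ᵥ ψ y < cs y ∧ ¬ θ₁ ⬝ᵥ ψ y < cs y} with hD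
  have hm : ∀ θ : Fin d → ℝ, MeasurableSet {y | θ ⬝ᵥ ψ y < cs y} := by
    intro θ
    apply measurableSet_lt _ hcsm
    unfold dotProduct
    fun_prop
  have hDm : MeasurableSet D :=
    ((hm θ₁).inter (hm θ₂).compl).union ((hm θ₂).inter (hm θ₁).compl)
  have hPD : (P x).real D ≤ 2 * K * e := by
    have h1 := aux_core (P x) ψ hψm C hC hψC cs θcs hspan L (ℓ x) (ψ x) (hdens x) (hL x) θ₁ θ₂
    have h2 := aux_core (P x) ψ hψm C hC hψC cs θcs hspan L (ℓ x) (ψ x) (hdens x) (hL x) θ₂ θ₁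
    rw [aux_symm θ₂ θ₁] at h2
    refine ENNReal.toReal_le_of_le_ofReal (by positivity) ?_
    refine (measure_union_le _ _).trans ((add_le_add h1 h2).trans (le_of_eq ?_))
    rw [← ENNReal.ofReal_add (by positivity) (by positivity)]
    congr 1; ring
  have hent : ∀ i j, |∫ y, ψ x i *
          (((if θ₁ ⬝ᵥ ψ y < cs y then (1 : ℝ) else 0) -
            (if θ₂ ⬝ᵥ ψ y < cs y then (1 : ℝ) else 0)) * ψ y j) ∂(P x)| ≤
      C * C * (2 * K) * e := by
    intro i j
    have hbd : ∀ y, ‖ψ x i *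
          (((if θ₁ ⬝ᵥ ψ y < cs y then (1 : ℝ) else 0) -
            (if θ₂ ⬝ᵥ ψ y < cs y then (1 : ℝ) else 0)) * ψ y j)‖ ≤
            D.indicator (fun _ => C * C) y := by
      intro y
      have hx := (aux_coord (ψ x) i).trans (hψC x)
      have hy := (aux_coord (ψ y) j).trans (hψC y)
      have hxy : |ψ x i| * |ψ y j| ≤ C * C :=
        mul_le_mul hx hy (abs_nonneg _) hC.le
      by_cases h1 : θ₁ ⬝ᵥ ψ y < cs y <;> by_cases h2 : θ₂ ⬝ᵥ ψ y < cs y <;>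
        simp [-not_lt, hD, Set.indicator, h1, h2, abs_mul, hxy, hC.le]
    have := norm_integral_le_of_norm_le
      ((integrable_const (C * C)).indicator hDm : Integrable _ (P x))
      (Filter.Eventually.of_forall hbd)
    rw [integral_indicator_const _ hDm, Real.norm_eq_abs, smul_eq_mul] at this
    refine this.trans ?_
    calc (P x).real D * (C * C) ≤ (2 * K * e) * (C * C) :=
          mul_le_mul_of_nonneg_right hPD (by positivity)
      _ = _ := by ring
  unfold frobNorm
  apply Real.sqrt_le_iff.mpr
  refine ⟨by positivity, ?_⟩
  calc _ ≤ ∑ _i : Fin d, ∑ _j : Fin d, (C * C * (2 * K) * e) ^ 2 := by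
        refine Finset.sum_le_sum fun i _ => Finset.sum_le_sum fun j _ => ?_
        exact sq_le_sq' (abs_le.mp (hent i j)).1 (abs_le.mp (hent i j)).2
    _ = _ := by
        simp only [Finset.sum_const, Finset.card_univ, Fintype.card_fin, nsmul_eq_mul]
        ring
end

section
/- Let μ be a finite measure on X and suppose c_s and ‖ψ‖ are μ-integrable. Define g : ℝ^d → ℝ by g(θ) = ∫ min(c_s(y), ⟨θ, ψ(y)⟩) μ(dy). Then g is concave, and for every θ ∈ ℝ^d the vector v(θ) = ∫ 𝟙{⟨θ, ψ(y)⟩ < c_s(y)} ψ(y) μ(dy) is a supergradient of g at θ: g(θ′) ≤ g(θ) + ⟨v(θ), θ′ − θ⟩ for all θ′ ∈ ℝ^d. -/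
open MeasureTheory Matrix

/-- Let `μ` be a finite measure with `c_s` and `‖ψ‖` integrable.
Define `g(θ) = ∫ min(c_s(y), ⟨θ, ψ(y)⟩) μ(dy)`.  Then `g` is concave, and
`v(θ) = ∫ 𝟙{⟨θ, ψ(y)⟩ < c_s(y)} ψ(y) μ(dy)` is a supergradient of `g` at `θ`:
`g(θ′) ≤ g(θ) + ⟨v(θ), θ′ − θ⟩` for all `θ′`. -/
theorem min_integral_concave_supergradient
    {X : Type*} [MeasurableSpace X] {d : ℕ}
    (μ : Measure X) [IsFiniteMeasure μ]
    (ψ : X → Fin d → ℝ) (hψm : Measurable ψ)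
    (cs : X → ℝ) (hcsm : Measurable cs)
    (hψint : Integrable (fun y => euclNorm (ψ y)) μ)
    (hcsint : Integrable cs μ)
    (g : (Fin d → ℝ) → ℝ)
    (hg : ∀ θ, g θ = ∫ y, min (cs y) (θ ⬝ᵥ ψ y) ∂μ)
    (v : (Fin d → ℝ) → Fin d → ℝ)
    (hv : ∀ θ i, v θ i = ∫ y, (if θ ⬝ᵥ ψ y < cs y then ψ y i else 0) ∂μ) :
    ConcaveOn ℝ Set.univ g ∧
    ∀ θ θ' : Fin d → ℝ, g θ' ≤ g θ + v θ ⬝ᵥ (θ' - θ) := by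
  have hψi : ∀ i, Integrable (fun y => ψ y i) μ := by
    intro i
    refine hψint.mono' ((measurable_pi_apply i).comp hψm).aestronglyMeasurable ?_
    refine Filter.Eventually.of_forall fun y => ?_
    rw [Real.norm_eq_abs]
    exact Real.abs_le_sqrt
      (Finset.single_le_sum (f := fun j => ψ y j ^ 2) (fun j _ => sq_nonneg _) (Finset.mem_univ i))
  have hdot : ∀ θ : Fin d → ℝ, Integrable (fun y => θ ⬝ᵥ ψ y) μ := by
    intro θ
    simp only [dotProduct]
    exact integrable_finset_sum _ fun i _ => (hψi i).const_mul _
  have hmin : ∀ θ : Fin d → ℝ, Integrable (fun y => min (cs y) (θ ⬝ᵥ ψ y)) μ :=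
    fun θ => hcsint.inf (hdot θ)
  have hdm : ∀ θ : Fin d → ℝ, Measurable (fun y => θ ⬝ᵥ ψ y) := by
    intro θ
    simp only [dotProduct]
    exact Finset.measurable_sum _ fun i _ =>
      ((measurable_pi_apply i).comp hψm).const_mul _
  have hind : ∀ (θ : Fin d → ℝ) i,
      Integrable (fun y => if θ ⬝ᵥ ψ y < cs y then ψ y i else 0) μ := by
    intro θ i
    have := (hψi i).indicator (measurableSet_lt (hdm θ) hcsm)
    refine this.congr (Filter.Eventually.of_forall fun y => ?_)
    simp [Set.indicator_apply]
  have key : ∀ θ θ' : Fin d → ℝ, g θ' ≤ g θ + v θ ⬝ᵥ (θ' - θ) := by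
    intro θ θ'
    have hI : ∀ i ∈ Finset.univ, Integrable
        (fun y => (if θ ⬝ᵥ ψ y < cs y then ψ y i else 0) * (θ' - θ) i) μ :=
      fun i _ => (hind θ i).mul_const _
    have hvd : v θ ⬝ᵥ (θ' - θ) =
        ∫ y, ∑ i, (if θ ⬝ᵥ ψ y < cs y then ψ y i else 0) * (θ' - θ) i ∂μ := by
      rw [integral_finset_sum _ hI]
      simp only [dotProduct]
      refine Finset.sum_congr rfl fun i _ => ?_
      rw [integral_mul_const, hv]
      rfl
    rw [hvd, hg, hg, ← integral_add (hmin θ) (integrable_finset_sum _ hI)]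
    refine integral_mono (hmin θ') ((hmin θ).add (integrable_finset_sum _ hI)) fun y => ?_
    by_cases h : θ ⬝ᵥ ψ y < cs y
    · have h2 : ∑ i, ψ y i * (θ' - θ) i = θ' ⬝ᵥ ψ y - θ ⬝ᵥ ψ y := by
        rw [← sub_dotProduct, dotProduct_comm]; rfl
      simp only [h, if_true, h2, min_eq_right h.le, Pi.add_apply]
      linarith [min_le_right (cs y) (θ' ⬝ᵥ ψ y)]
    · simp only [h, if_false, zero_mul, Finset.sum_const_zero, add_zero,
        min_eq_left (not_lt.mp h), Pi.add_apply]
      exact min_le_left _ _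
  refine ⟨⟨convex_univ, ?_⟩, key⟩
  intro x _ y _ a b ha hb hab
  have h1 := mul_le_mul_of_nonneg_left (key (a • x + b • y) x) ha
  have h2 := mul_le_mul_of_nonneg_left (key (a • x + b • y) y) hb
  have h3 : a * (v (a • x + b • y) ⬝ᵥ (x - (a • x + b • y)))
      + b * (v (a • x + b • y) ⬝ᵥ (y - (a • x + b • y))) = 0 := by
    generalize v (a • x + b • y) = w
    obtain rfl : b = 1 - a := by linarith
    simp only [dotProduct_sub, dotProduct_add, dotProduct_smul, smul_eq_mul]
    ring
  have h4 : a * g (a • x + b • y) + b * g (a • x + b • y) = g (a • x + b • y) := by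
    rw [← add_mul, hab, one_mul]
  simp only [smul_eq_mul]
  linarith
end

section
/- Suppose π is invariant under P, each component of ψ is in L²(π), and for every x ∈ X the image of P(x,·) under ψ : X → ℝ^d is absolutely continuous with respect to Lebesgue measure on ℝ^d. Then the covariance matrix Σ_ψ = ∫ ψ(x) ψ(x)ᵀ π(dx) is positive definite. -/
open MeasureTheory ProbabilityTheory Matrix

/-- Suppose `π` is invariant under `P`, each component of `ψ` is
in `L²(π)`, and for every `x` the image of `P(x,·)` under `ψ : X → ℝ^d` is
absolutely continuous with respect to Lebesgue measure on `ℝ^d`.  Then the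
covariance matrix `Σ_ψ = ∫ ψ(x) ψ(x)ᵀ π(dx)` is positive definite. -/
theorem covariance_matrix_posdef
    {X : Type*} [MeasurableSpace X] {d : ℕ}
    (P : Kernel X X) [IsMarkovKernel P]
    (π : Measure X) [IsProbabilityMeasure π]
    (hinv : π.bind (fun x => P x) = π)
    (ψ : X → Fin d → ℝ) (hψm : Measurable ψ)
    (hψ2 : ∀ i, MemLp (fun x => ψ x i) 2 π)
    (habs : ∀ x, Measure.map ψ (P x) ≪ (volume : Measure (Fin d → ℝ)))
    (Sψ : Matrix (Fin d) (Fin d) ℝ)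
    (hSψ : ∀ i j, Sψ i j = ∫ x, ψ x i * ψ x j ∂π) :
    Sψ.PosDef := by
  rw [Matrix.posDef_iff_dotProduct_mulVec]
  refine ⟨?_, ?_⟩
  · ext i j
    simp [hSψ, mul_comm]
  intro v hv
  have hint : ∀ i j, Integrable (fun x => ψ x i * ψ x j) π := fun i j =>
    (hψ2 i).integrable_mul (hψ2 j)
  have hsq : ∀ x, (∑ i, v i * ψ x i) ^ 2 = ∑ i, ∑ j, (v i * v j) * (ψ x i * ψ x j) := by
    intro x
    rw [sq, Finset.sum_mul_sum]
    exact Finset.sum_congr rfl fun i _ => Finset.sum_congr rfl fun j _ => by ring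
  have hintsq : Integrable (fun x => (∑ i, v i * ψ x i) ^ 2) π := by
    simp only [hsq]
    exact integrable_finsetSum _ fun i _ => integrable_finsetSum _ fun j _ =>
      (hint i j).const_mul _
  have hq : star v ⬝ᵥ (Sψ *ᵥ v) = ∫ x, (∑ i, v i * ψ x i) ^ 2 ∂π := by
    simp only [hsq]
    rw [integral_finsetSum _ fun i _ => integrable_finsetSum _ fun j _ =>
      (hint i j).const_mul _]
    simp only [dotProduct, mulVec, Finset.mul_sum]
    refine Finset.sum_congr rfl fun i _ => ?_
    rw [integral_finsetSum _ fun j _ => (hint i j).const_mul _]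
    refine Finset.sum_congr rfl fun j _ => ?_
    rw [integral_const_mul, hSψ]
    simp
    ring
  rw [hq]
  refine lt_of_le_of_ne (integral_nonneg fun x => sq_nonneg _) fun h0 => ?_
  have hae := (integral_eq_zero_iff_of_nonneg (fun x => sq_nonneg _) hintsq).1 h0.symm
  let L : (Fin d → ℝ) →ₗ[ℝ] ℝ := ∑ i, v i • LinearMap.proj i
  have hL : ∀ y, L y = ∑ i, v i * y i := fun y => by simp [L]
  have hker : LinearMap.ker L ≠ ⊤ := by
    intro h
    have : v ∈ LinearMap.ker L := h ▸ Submodule.mem_top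
    rw [LinearMap.mem_ker, hL] at this
    exact hv (dotProduct_self_eq_zero.1 this)
  have hnull : (volume : Measure (Fin d → ℝ)) (LinearMap.ker L) = 0 :=
    Measure.addHaar_submodule _ _ hker
  have hmeas : MeasurableSet (LinearMap.ker L : Set (Fin d → ℝ)) :=
    (Submodule.closed_of_finiteDimensional _).measurableSet
  have h1 : π (ψ ⁻¹' (LinearMap.ker L : Set (Fin d → ℝ))) = 0 := by
    rw [← hinv, Measure.bind_apply (hψm hmeas) P.measurable.aemeasurable]
    have : ∀ x, P x (ψ ⁻¹' (LinearMap.ker L : Set (Fin d → ℝ))) = 0 := fun x => by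
      rw [← Measure.map_apply hψm hmeas]
      exact habs x hnull
    simp [this]
  have h2 : ∀ᵐ x ∂π, x ∉ ψ ⁻¹' (LinearMap.ker L : Set (Fin d → ℝ)) := measure_eq_zero_iff_ae_notMem.1 h1
  have h3 : ∀ᵐ x ∂π, False := by
    filter_upwards [hae, h2] with x hx hx2
    apply hx2
    show L (ψ x) = 0
    rw [hL]
    simpa using hx
  obtain ⟨_, h⟩ := h3.exists
  exact h
end

section
/- Let A, G, Σ_ε be d×d real matrices with A invertible and Σ_ε symmetric positive semidefinite. Suppose every eigenvalue of M := G A + (1/2) I has negative real part, and let Σ be a symmetric matrix solving the Lyapunov equation M Σ + Σ Mᵀ + G Σ_ε Gᵀ = 0. Then Σ − A⁻¹ Σ_ε (A⁻¹)ᵀ is positive semidefinite. Moreover, for the choice G = −A⁻¹, the matrix Σ* = A⁻¹ Σ_ε (A⁻¹)ᵀ solves the Lyapunov equation, so Σ* is the minimal solution over all admissible gains G in the positive semidefinite order. -/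
open Matrix

open Filter Topology in
theorem aux_pow_tendsto {B : Type*} [NormedRing B] [NormedAlgebra ℂ B] [CompleteSpace B]
    (a : B) (h : spectralRadius ℂ a < 1) : Tendsto (fun n : ℕ => a ^ n) atTop (𝓝 0) := by
  obtain ⟨r, hr1, hr2⟩ := ENNReal.lt_iff_exists_nnreal_btwn.1 h
  have hg := spectrum.pow_nnnorm_pow_one_div_tendsto_nhds_spectralRadius a
  have hev := hg.eventually (gt_mem_nhds hr1)
  rw [tendsto_zero_iff_norm_tendsto_zero]
  have hr : (r : ℝ) < 1 := by exact_mod_cast hr2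
  refine squeeze_zero' (Eventually.of_forall fun _ => norm_nonneg _) ?_
    (tendsto_pow_atTop_nhds_zero_of_lt_one r.2 hr)
  filter_upwards [hev, eventually_gt_atTop 0] with n hn hn0
  have hn' : (0 : ℝ) < n := by exact_mod_cast hn0
  have h1 : (‖a ^ n‖₊ : ENNReal) ≤ (r : ENNReal) ^ (n : ℝ) := by
    have := ENNReal.rpow_le_rpow hn.le hn'.le
    rwa [← ENNReal.rpow_mul, one_div, inv_mul_cancel₀ hn'.ne', ENNReal.rpow_one] at this
  rw [ENNReal.rpow_natCast] at h1
  exact_mod_cast h1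

attribute [local instance] Matrix.linftyOpNormedRing Matrix.linftyOpNormedAlgebra in
open Filter Topology in
theorem aux_mat {d : ℕ} (C : Matrix (Fin d) (Fin d) ℂ)
    (h : ∀ z ∈ spectrum ℂ C, ‖z‖ < 1) (i j : Fin d) :
    Tendsto (fun n : ℕ => (C ^ n) i j) atTop (𝓝 0) := by
  have : Nonempty (Fin d) := ⟨i⟩
  have : CompleteSpace (Matrix (Fin d) (Fin d) ℂ) := FiniteDimensional.complete ℂ _
  have h1 : spectralRadius ℂ C < (1 : NNReal) :=
    spectrum.spectralRadius_lt_of_forall_lt C (fun z hz => by exact_mod_cast h z hz)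
  have h2 := aux_pow_tendsto C (by simpa using h1)
  let L : Matrix (Fin d) (Fin d) ℂ →ₗ[ℂ] ℂ := Matrix.entryLinearMap ℂ ℂ i j
  have hc : Continuous L := L.continuous_of_finiteDimensional
  have h3 := (hc.tendsto 0).comp h2
  simpa [L, Function.comp_def] using h3

theorem aux_cayley {R : Type*} [Ring R] [Algebra ℂ R] (M N : R) (hN : (1 - M) * N = 1)
    (hN' : N * (1 - M) = 1)
    (h : ∀ z ∈ spectrum ℂ M, z.re < 0) : ∀ z ∈ spectrum ℂ (N * (1 + M)), ‖z‖ < 1 := by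
  intro z hz
  by_contra hlt
  push Not at hlt
  have hNu : IsUnit N := ⟨⟨N, 1 - M, hN', hN⟩, rfl⟩
  refine hz (?_ : IsUnit _)
  have key : algebraMap ℂ R z - N * (1 + M)
      = N * (algebraMap ℂ R (z - 1) - algebraMap ℂ R (z + 1) * M) := by
    have e : algebraMap ℂ R z = N * (1 - M) * algebraMap ℂ R z := by rw [hN', one_mul]
    rw [e, mul_assoc, ← mul_sub]
    congr 1
    have hc : M * algebraMap ℂ R z = algebraMap ℂ R z * M := (Algebra.commutes z M).symm
    simp only [map_sub, map_add, map_one, sub_mul, add_mul, one_mul, hc]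
    abel
  rw [key]
  refine hNu.mul ?_
  by_cases h1 : z + 1 = 0
  · rw [h1, map_zero, zero_mul, sub_zero]
    have : z - 1 ≠ 0 := by
      intro h2
      have : (2 : ℂ) = 0 := by linear_combination h1 - h2
      norm_num at this
    exact (IsUnit.mk0 _ this).map (algebraMap ℂ R)
  · have hns : (z - 1) / (z + 1) ∉ spectrum ℂ M := by
      intro hm
      have := h _ hm
      have hpos : 0 < Complex.normSq (z + 1) := Complex.normSq_pos.2 h1
      rw [Complex.div_re, ← add_div, div_lt_iff₀ hpos, zero_mul] at this
      have hz2 : 1 ≤ ‖z‖ ^ 2 := by nlinarith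
      rw [← Complex.normSq_eq_norm_sq, Complex.normSq_apply] at hz2
      simp at this
      nlinarith
    rw [spectrum.notMem_iff] at hns
    have e2 : algebraMap ℂ R (z - 1) - algebraMap ℂ R (z + 1) * M
        = algebraMap ℂ R (z + 1) * (algebraMap ℂ R ((z - 1) / (z + 1)) - M) := by
      rw [mul_sub, ← map_mul, mul_div_cancel₀ _ h1]
    rw [e2]
    exact ((IsUnit.mk0 _ h1).map (algebraMap ℂ R)).mul hns

open Filter Topology in
theorem aux_lyap {d : ℕ} (M D Q : Matrix (Fin d) (Fin d) ℝ)
    (hspec : ∀ z : ℂ, z ∈ spectrum ℂ (M.map (Complex.ofReal : ℝ → ℂ)) → z.re < 0)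
    (hD : D.IsSymm) (hQ : Q.PosSemidef) (h : M * D + D * Mᵀ + Q = 0) : D.PosSemidef := by
  let φ : Matrix (Fin d) (Fin d) ℝ →+* Matrix (Fin d) (Fin d) ℂ := Complex.ofRealHom.mapMatrix
  have hφ : ∀ X, φ X = X.map (Complex.ofReal : ℝ → ℂ) := fun X => rfl
  have hu : IsUnit (1 - M) := by
    have h1 : (1 : ℂ) ∉ spectrum ℂ (φ M) := fun hm => by
      have := hspec _ hm
      norm_num at this
    rw [spectrum.notMem_iff, map_one, ← map_one φ, ← map_sub, Matrix.isUnit_iff_isUnit_det,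
      ← RingHom.map_det, isUnit_iff_ne_zero] at h1
    rw [Matrix.isUnit_iff_isUnit_det, isUnit_iff_ne_zero]
    intro h0
    exact h1 (by rw [h0, map_zero])
  obtain ⟨u, hu⟩ := hu
  obtain ⟨N, hN, hN'⟩ : ∃ N : Matrix (Fin d) (Fin d) ℝ, (1 - M) * N = 1 ∧ N * (1 - M) = 1 :=
    ⟨(↑(u⁻¹) : Matrix (Fin d) (Fin d) ℝ), by rw [← hu]; exact u.mul_inv, by rw [← hu]; exact u.inv_mul⟩
  set C := N * (1 + M) with hC
  have hCs : ∀ z ∈ spectrum ℂ (φ C), ‖z‖ < 1 := by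
    have := aux_cayley (φ M) (φ N) (by rw [← map_one φ, ← map_sub, ← map_mul, hN])
      (by rw [← map_one φ, ← map_sub, ← map_mul, hN']) hspec
    rwa [← map_one φ, ← map_add, ← map_mul] at this
  have hCt : Tendsto (fun n : ℕ => C ^ n) atTop (𝓝 0) := by
    refine tendsto_pi_nhds.2 fun i => tendsto_pi_nhds.2 fun j => ?_
    have := (Complex.continuous_re.tendsto 0).comp (aux_mat (φ C) hCs i j)
    have e : ∀ n : ℕ, (((φ C) ^ n) i j).re = (C ^ n) i j := fun n => by
      rw [← map_pow, hφ, Matrix.map_apply, Complex.ofReal_re]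
    simpa only [Function.comp_def, e, Complex.zero_re, Matrix.zero_apply] using this
  have hstep : D - C * D * Cᵀ = N * ((2 : ℝ) • Q) * Nᵀ := by
    have hQe : Q = -(M * D + D * Mᵀ) := by
      rw [eq_neg_iff_add_eq_zero, add_comm]; exact h
    have e1 : (2 : ℝ) • Q = (1 - M) * D * (1 - M)ᵀ - (1 + M) * D * (1 + M)ᵀ := by
      rw [hQe, two_smul]
      simp only [transpose_sub, transpose_add, transpose_one]
      noncomm_ring
    have e2 : D = (N * (1 - M)) * D * (N * (1 - M))ᵀ := by rw [hN']; simp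
    calc D - C * D * Cᵀ = (N * (1 - M)) * D * (N * (1 - M))ᵀ - C * D * Cᵀ := by rw [← e2]
      _ = _ := by
        rw [e1, hC]
        generalize 1 - M = P
        generalize 1 + M = P'
        simp only [transpose_mul, Matrix.mul_assoc, mul_sub, sub_mul]
  have hmono : ∀ n : ℕ, (D - C ^ n * D * (C ^ n)ᵀ).PosSemidef := by
    intro n
    induction n with
    | zero => simpa using Matrix.PosSemidef.zero
    | succ n ih =>
      have e : D - C ^ (n + 1) * D * (C ^ (n + 1))ᵀ =
          (D - C ^ n * D * (C ^ n)ᵀ) + (C ^ n * N) * ((2 : ℝ) • Q) * (C ^ n * N)ᴴ := by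
        have : (C ^ n * N) * ((2 : ℝ) • Q) * (C ^ n * N)ᴴ
            = C ^ n * (N * ((2 : ℝ) • Q) * Nᵀ) * (C ^ n)ᵀ := by
          simp only [conjTranspose_eq_transpose_of_trivial, transpose_mul, Matrix.mul_assoc]
        rw [this, ← hstep, pow_succ]
        simp only [transpose_mul, mul_sub, sub_mul, Matrix.mul_assoc]
        abel
      rw [e]
      exact ih.add ((hQ.smul (by norm_num : (0 : ℝ) ≤ 2)).mul_mul_conjTranspose_same _)
  refine .of_dotProduct_mulVec_nonneg (by simpa [Matrix.IsHermitian] using hD.eq) fun x => ?_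
  have hlim : Tendsto (fun n : ℕ => star x ⬝ᵥ ((D - C ^ n * D * (C ^ n)ᵀ) *ᵥ x)) atTop
      (𝓝 (star x ⬝ᵥ (D *ᵥ x))) := by
    have hc : Continuous fun X : Matrix (Fin d) (Fin d) ℝ =>
        star x ⬝ᵥ ((D - X * D * Xᵀ) *ᵥ x) := by fun_prop
    have := (hc.tendsto 0).comp hCt
    simpa [Function.comp_def] using this
  exact ge_of_tendsto' hlim fun n => (hmono n).dotProduct_mulVec_nonneg x

/-- Let `A, G, Σ_ε` be `d×d` real matrices with `A` invertible and
`Σ_ε` symmetric positive semidefinite.  Suppose every eigenvalue of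
`M = G A + (1/2) I` has negative real part, and let `Σ` be a symmetric solution
of the Lyapunov equation `M Σ + Σ Mᵀ + G Σ_ε Gᵀ = 0`.  Then
`Σ − A⁻¹ Σ_ε (A⁻¹)ᵀ` is positive semidefinite.  Moreover, for `G = −A⁻¹`, the
matrix `Σ* = A⁻¹ Σ_ε (A⁻¹)ᵀ` solves the Lyapunov equation, so `Σ*` is the
minimal solution over all admissible gains in the positive semidefinite
order. -/
theorem lyapunov_minimal_asymptotic_covariance
    {d : ℕ}
    (A G Se Sm : Matrix (Fin d) (Fin d) ℝ)
    (hA : IsUnit A)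
    (hSe : Se.PosSemidef)
    (hspec : ∀ z : ℂ, z ∈ spectrum ℂ
        ((G * A + ((1 : ℝ) / 2) • (1 : Matrix (Fin d) (Fin d) ℝ)).map
          (Complex.ofReal : ℝ → ℂ)) → z.re < 0)
    (hSsymm : Sm.IsSymm)
    (hlyap : (G * A + ((1 : ℝ) / 2) • (1 : Matrix (Fin d) (Fin d) ℝ)) * Sm +
        Sm * (G * A + ((1 : ℝ) / 2) • (1 : Matrix (Fin d) (Fin d) ℝ))ᵀ +
        G * Se * Gᵀ = 0) :
    (Sm - A⁻¹ * Se * (A⁻¹)ᵀ).PosSemidef ∧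
    ((-A⁻¹) * A + ((1 : ℝ) / 2) • (1 : Matrix (Fin d) (Fin d) ℝ)) *
        (A⁻¹ * Se * (A⁻¹)ᵀ) +
      (A⁻¹ * Se * (A⁻¹)ᵀ) *
        ((-A⁻¹) * A + ((1 : ℝ) / 2) • (1 : Matrix (Fin d) (Fin d) ℝ))ᵀ +
      (-A⁻¹) * Se * (-A⁻¹)ᵀ = 0 := by
  have hdet : IsUnit A.det := (Matrix.isUnit_iff_isUnit_det A).1 hA
  have hAi : A * A⁻¹ = 1 := Matrix.mul_nonsing_inv A hdet
  have hiA : A⁻¹ * A = 1 := Matrix.nonsing_inv_mul A hdet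
  have hSeT : Seᵀ = Se := by simpa [Matrix.IsHermitian] using hSe.1
  generalize A⁻¹ = B at *
  have half : ∀ X : Matrix (Fin d) (Fin d) ℝ, ((1 : ℝ) / 2) • X + ((1 : ℝ) / 2) • X = X := by
    intro X; rw [← add_smul]; norm_num
  constructor
  · refine aux_lyap _ _ ((G + B) * Se * (G + B)ᴴ) hspec ?_ (hSe.mul_mul_conjTranspose_same _) ?_
    · refine hSsymm.sub ?_
      simp [Matrix.IsSymm, hSeT, Matrix.mul_assoc]
    · have e1 : G * A * (B * Se * Bᵀ) = G * Se * Bᵀ := by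
        calc _ = G * (A * B) * Se * Bᵀ := by simp only [Matrix.mul_assoc]
          _ = _ := by rw [hAi, mul_one]
      have e2 : (B * Se * Bᵀ) * (G * A)ᵀ = B * Se * Gᵀ := by
        calc _ = B * Se * (A * B)ᵀ * Gᵀ := by simp only [Matrix.mul_assoc, transpose_mul]
          _ = _ := by rw [hAi, transpose_one, mul_one]
      have e3 := half (B * Se * Bᵀ)
      have key : (G * A + ((1 : ℝ) / 2) • (1 : Matrix (Fin d) (Fin d) ℝ)) * (B * Se * Bᵀ) +
          (B * Se * Bᵀ) * (G * A + ((1 : ℝ) / 2) • (1 : Matrix (Fin d) (Fin d) ℝ))ᵀ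
          = G * Se * Bᵀ + B * Se * Gᵀ + B * Se * Bᵀ := by
        rw [transpose_add, add_mul, mul_add, e1, e2, transpose_smul, transpose_one,
          smul_mul_assoc, mul_smul_comm, one_mul, mul_one]
        calc _ = G * Se * Bᵀ + B * Se * Gᵀ +
              (((1 : ℝ) / 2) • (B * Se * Bᵀ) + ((1 : ℝ) / 2) • (B * Se * Bᵀ)) := by abel
          _ = _ := by rw [e3]
      rw [mul_sub, sub_mul, conjTranspose_eq_transpose_of_trivial]
      generalize G * A + ((1 : ℝ) / 2) • (1 : Matrix (Fin d) (Fin d) ℝ) = M at *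
      calc _ = (M * Sm + Sm * Mᵀ + G * Se * Gᵀ) - ((M * (B * Se * Bᵀ) + B * Se * Bᵀ * Mᵀ) -
            (G * Se * Bᵀ + B * Se * Gᵀ + B * Se * Bᵀ)) := by
              rw [transpose_add G B]
              noncomm_ring
        _ = 0 := by rw [hlyap, key, sub_self, sub_self]
  · have e : (-B) * A + ((1 : ℝ) / 2) • (1 : Matrix (Fin d) (Fin d) ℝ)
        = -(((1 : ℝ) / 2) • (1 : Matrix (Fin d) (Fin d) ℝ)) := by
      rw [neg_mul, hiA]
      nth_rewrite 1 [← half 1]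
      abel
    rw [e]
    simp only [transpose_neg, transpose_smul, transpose_one, neg_mul, mul_neg, smul_mul_assoc,
      mul_smul_comm, one_mul, mul_one, neg_neg]
    nth_rewrite 3 [← half (B * Se * Bᵀ)]
    abel
end
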